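/- Let (p_j)_{j≥0} be the increasing sequence of prime numbers, let n ≥ 3 and set N_n = p_{n+3}·p_{n+4}⋯p_{2n}. Let G_n = Φ^{½(I₂²+I₃²+⋯+I_{n−1}²) + N_n^{−2}V(θ₂)} be the time-one map on 𝔸^{n−2} of the Hamiltonian ½(I₂²+⋯+I_{n−1}²) + N_n^{−2}V(θ₂), with V(θ) = −cos(2πθ). Then for every α > 1 and L₁ > 0 there exist a function g_n ∈ G^{α,L₁}(𝔸^{n−2}) depending only on the angle variables, a point a_n ∈ 𝔸^{n−2}, and positive constants c₁, c₂ depending only on α and L₁, such that with M_n = 2·⌊c₁ N_n exp(c₂(n−2) p_{2n}^{1/α})⌋ and q_n = N_n M_n: the point a_n is q_n-periodic for G_n; the synchronization conditions g_n(a_n) = 1, dg_n(a_n) = 0, g_n(G_n^k(a_n)) = 0 and dg_n(G_n^k(a_n)) = 0 hold for all 1 ≤ k ≤ q_n − 1; and q_n^{−1}|g_n|_{α,L₁} ≤ N_n^{−2}. -/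

import Mathlib

open scoped BigOperators ENNReal
open Real

noncomputable section

/-- The circle `𝕋 = ℝ/ℤ`. -/
abbrev T1 := AddCircle (1 : ℝ)

instance : Fact ((0 : ℝ) < 1) := ⟨one_pos⟩

/-- The annulus `𝔸^N = 𝕋^N × ℝ^N` with angle-action coordinates. -/
abbrev Ann (N : ℕ) := (Fin N → T1) × (Fin N → ℝ)

/-- Projection of the universal cover `ℝ^N × ℝ^N` onto the annulus `𝔸^N`. -/
noncomputable def projAnn (N : ℕ) : ((Fin N → ℝ) × (Fin N → ℝ)) → Ann N :=
  fun x => (fun i => (x.1 i : T1), x.2)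

/-- `Φ` is the complete flow of the Hamiltonian `H` on the annulus `𝔸^N`: it is a
one-parameter family of maps whose orbits lift to curves on the universal cover solving
Hamilton's equations `θ' = ∂H/∂I`, `I' = −∂H/∂θ`.  `Φ 1` is the time-one map `Φ^H`. -/
def IsHamFlow (N : ℕ) (H : Ann N → ℝ) (Φ : ℝ → Ann N → Ann N) : Prop :=
  (∀ x, Φ 0 x = x) ∧ (∀ s t : ℝ, ∀ x, Φ (s + t) x = Φ s (Φ t x)) ∧
    ∀ x : Ann N, ∃ c : ℝ → (Fin N → ℝ) × (Fin N → ℝ),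
      (∀ t, projAnn N (c t) = Φ t x) ∧
      ∀ t : ℝ, ∀ i : Fin N,
        HasDerivAt (fun s => (c s).1 i)
          (fderiv ℝ (H ∘ projAnn N) (c t) ((0 : Fin N → ℝ), Pi.single i 1)) t ∧
        HasDerivAt (fun s => (c s).2 i)
          (-(fderiv ℝ (H ∘ projAnn N) (c t) (Pi.single i 1, (0 : Fin N → ℝ)))) t

/-- The canonical representative in `[0,1)` of a point of the circle. -/
noncomputable def rep (θ : T1) : ℝ := ((AddCircle.equivIco 1 0) θ).1

/-- The function `θ ↦ cos (2πθ)` on the circle. -/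
noncomputable def cosC (θ : T1) : ℝ := Real.cos (2 * Real.pi * rep θ)

/-- Projection of `ℝ^N` onto the torus `𝕋^N`. -/
noncomputable def projVec (N : ℕ) : (Fin N → ℝ) → (Fin N → T1) := fun x i => (x i : T1)

/-- Directional derivative operator: `dDir v f x = df(x)·v`. -/
noncomputable def dDir {E : Type*} [NormedAddCommGroup E] [NormedSpace ℝ E]
    (v : E) (f : E → ℝ) : E → ℝ :=
  fun x => fderiv ℝ f x v

/-- Iterated directional derivative along a list of directions. -/
noncomputable def derivAlong {E : Type*} [NormedAddCommGroup E] [NormedSpace ℝ E]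
    (l : List E) (f : E → ℝ) : E → ℝ :=
  l.foldr dDir f

/-- The list of coordinate directions associated to a multi-index `k ∈ ℕ^N` on `ℝ^N`. -/
noncomputable def vecDirs (N : ℕ) (k : Fin N → ℕ) : List (Fin N → ℝ) :=
  (List.finRange N).flatMap fun i => List.replicate (k i) (Pi.single i 1)

/-- The Gevrey-(α, L) norm `Σ_{k} L^{|k|α}(k!)^{−α}‖∂^k u‖_{C⁰}` of a function on the
torus `𝕋^N`, viewed as a `ℤ^N`-periodic function on `ℝ^N`.  For a function of the angle
variables only, this is its Gevrey norm as a function on the annulus `𝔸^N`. -/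
noncomputable def gevreyNormTor (N : ℕ) (α L : ℝ) (u : (Fin N → ℝ) → ℝ) : ℝ≥0∞ :=
  ∑' k : Fin N → ℕ,
    ENNReal.ofReal
      (L ^ (α * (((∑ i, k i : ℕ)) : ℝ)) / (((∏ i, Nat.factorial (k i) : ℕ)) : ℝ) ^ α *
        ⨆ x : Fin N → ℝ, |derivAlong (vecDirs N k) u x|)

/-!
The coupling function is the product of a Gevrey bump in the angle of the pendulum and of one Fejér
kernel of order `D` in the angle of each rotator. The base point lies on an orbit where the rotator
with kernel of order `D` turns with period `D`, and the pendulum, after rescaling time by `N`, turns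
with period `N M`. At time `k` the kernel of order `D` vanishes unless `D ∣ k`. When every `D`
divides `k`, then `k` is a multiple of `N`, up to a bounded factor, and the bump vanishes there if
`k < N M`, because a rotating pendulum leaves its base point quickly. All factors take values in
`[0, 1]`, so the coupling function is critical wherever it equals `0` or `1`.

The product `N` has `n - 2` prime factors but there are only `n - 3` rotators, so one of them is
given a product of two primes as period. The norm costs a factor `exp (C ∑ D ^ (1 / α))`, and
Chebyshev's bound on primes keeps the sum below a multiple of `(n - 2) p_{2n} ^ (1 / α)`.
-/

section GevreyNorm

/-- The Gevrey-`(α, L)` norm `∑ₖ L^{kα} (k!)^{-α} ‖u^{(k)}‖_{C⁰}` of a function of one variable,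
with value `⊤` when the series diverges. -/
def gevreyNorm (α L : ℝ) (u : ℝ → ℝ) : ℝ≥0∞ :=
  ∑' k : ℕ, ENNReal.ofReal ((L ^ k / k.factorial) ^ α) * ⨆ x, ‖iteratedDeriv k u x‖ₑ

variable {α L : ℝ} {u : ℝ → ℝ}

lemma gevreyNorm_le_tsum {B : ℕ → ℝ} (hL : 0 ≤ L) (hu : ∀ k x, |iteratedDeriv k u x| ≤ B k)
    (hB : Summable fun k : ℕ => (L ^ k / k.factorial) ^ α * B k) :
    gevreyNorm α L u ≤ ENNReal.ofReal (∑' k : ℕ, (L ^ k / k.factorial) ^ α * B k) := by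
  have hB0 (k : ℕ) : 0 ≤ B k := (abs_nonneg _).trans (hu k 0)
  rw [ENNReal.ofReal_tsum_of_nonneg (fun k => mul_nonneg (by positivity) (hB0 k)) hB]
  refine ENNReal.tsum_le_tsum fun k => ?_
  rw [ENNReal.ofReal_mul (by positivity)]
  gcongr
  refine iSup_le fun x => ?_
  rw [Real.enorm_eq_ofReal_abs]
  exact ENNReal.ofReal_le_ofReal (hu k x)

lemma rpow_div_factorial_le_mul_exp {x : ℝ} (hα : 1 ≤ α) (hx : 0 ≤ x) (k : ℕ) :
    (x ^ k / k.factorial) ^ α ≤ x ^ k / k.factorial * exp ((α - 1) * x) := by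
  have h0 : 0 ≤ x ^ k / k.factorial := by positivity
  calc (x ^ k / k.factorial) ^ α
      = x ^ k / k.factorial * (x ^ k / k.factorial) ^ (α - 1) := by
        rw [← rpow_one_add' h0 (by linarith), add_sub_cancel]
    _ ≤ x ^ k / k.factorial * exp x ^ (α - 1) := by
        have := pow_div_factorial_le_exp x hx k
        gcongr
    _ = x ^ k / k.factorial * exp ((α - 1) * x) := by rw [← exp_mul, mul_comm x]

lemma summable_rpow_div_factorial {x : ℝ} (hα : 0 < α) (hx : 0 ≤ x) :
    Summable fun k : ℕ => (x ^ k / k.factorial) ^ α := by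
  have hhalf : (1 / 2 : ℝ) ^ α < 1 := rpow_lt_one (by norm_num) (by norm_num) hα
  refine Summable.of_nonneg_of_le (fun k => by positivity) (fun k => ?_)
    ((summable_geometric_of_lt_one (by positivity) hhalf).mul_left (exp (2 * x) ^ α))
  calc (x ^ k / k.factorial) ^ α
      = ((2 * x) ^ k / k.factorial) ^ α * ((1 / 2 : ℝ) ^ α) ^ k := by
        rw [rpow_pow_comm (by norm_num), ← mul_rpow (by positivity) (by positivity)]
        congr 1
        rw [div_mul_eq_mul_div, ← mul_pow]
        ring_nf
    _ ≤ exp (2 * x) ^ α * ((1 / 2 : ℝ) ^ α) ^ k := by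
        have := pow_div_factorial_le_exp (2 * x) (by positivity) k
        gcongr

lemma gevreyNorm_le_exp {Y : ℝ} (hα : 1 < α) (hL : 0 ≤ L) (hY : 0 ≤ Y)
    (hu : ∀ k x, |iteratedDeriv k u x| ≤ Y ^ k) :
    gevreyNorm α L u ≤ ENNReal.ofReal (exp (α * L * Y ^ (1 / α))) := by
  set x : ℝ := L * Y ^ (1 / α) with hx
  have hx0 : 0 ≤ x := by positivity
  have hterm (k : ℕ) : (L ^ k / k.factorial) ^ α * Y ^ k = (x ^ k / k.factorial) ^ α := by
    have hYk : Y ^ k = ((Y ^ (1 / α)) ^ k) ^ α := by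
      rw [← rpow_pow_comm (by positivity), ← rpow_mul hY, one_div_mul_cancel (by linarith),
        rpow_one]
    rw [hYk, ← mul_rpow (by positivity) (by positivity), hx, mul_pow, div_mul_eq_mul_div]
  have hsum := summable_rpow_div_factorial (α := α) (by linarith) hx0
  refine (gevreyNorm_le_tsum hL hu (by simpa only [hterm] using hsum)).trans ?_
  refine ENNReal.ofReal_le_ofReal ?_
  simp only [hterm]
  calc ∑' k : ℕ, (x ^ k / k.factorial) ^ α
      ≤ ∑' k : ℕ, x ^ k / k.factorial * exp ((α - 1) * x) :=
        hsum.tsum_le_tsum (rpow_div_factorial_le_mul_exp hα.le hx0)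
          ((summable_pow_div_factorial x).mul_right _)
    _ = exp x * exp ((α - 1) * x) := by
        rw [tsum_mul_right, exp_eq_exp_ℝ, NormedSpace.exp_eq_tsum_div]
    _ = exp (α * L * Y ^ (1 / α)) := by rw [← exp_add, hx]; ring_nf

lemma gevreyNorm_lt_top {c R β : ℝ} (hL : 0 ≤ L) (hR : 0 ≤ R) (hβ : β < α)
    (hu : ∀ k x, |iteratedDeriv k u x| ≤ c * R ^ k * (k.factorial : ℝ) ^ β) :
    gevreyNorm α L u < ⊤ := by
  set y : ℝ := (L ^ α * R) ^ (1 / (α - β)) with hy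
  have hyR : y ^ (α - β) = L ^ α * R := by
    rw [hy, ← rpow_mul (by positivity), one_div_mul_cancel (by linarith), rpow_one]
  have hterm (k : ℕ) : (L ^ k / k.factorial) ^ α * (c * R ^ k * (k.factorial : ℝ) ^ β) =
      c * (y ^ k / k.factorial) ^ (α - β) := by
    rw [div_rpow (by positivity) (by positivity), div_rpow (by positivity) (by positivity),
      ← rpow_pow_comm hL, ← rpow_pow_comm (by positivity), hyR, mul_pow,
      rpow_sub (by positivity)]
    field_simp
  refine (gevreyNorm_le_tsum hL hu ?_).trans_lt ENNReal.ofReal_lt_top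
  simp only [hterm]
  exact (summable_rpow_div_factorial (by linarith) (by positivity)).mul_left c

end GevreyNorm

section TensorProduct

/-- The tensor product `x ↦ ∏ᵢ uᵢ(xᵢ)` of functions of one variable. -/
def tensorProd {ι : Type*} [Fintype ι] (u : ι → ℝ → ℝ) (x : ι → ℝ) : ℝ := ∏ i, u i (x i)

lemma contDiff_tensorProd {ι : Type*} [Fintype ι] {u : ι → ℝ → ℝ} {n : WithTop ℕ∞}
    (hu : ∀ i, ContDiff ℝ n (u i)) : ContDiff ℝ n (tensorProd u) :=
  contDiff_prod fun i _ => (hu i).comp (contDiff_apply ℝ ℝ i)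

lemma dDir_tensorProd {ι : Type*} [Fintype ι] [DecidableEq ι] {u : ι → ℝ → ℝ}
    (hu : ∀ i, Differentiable ℝ (u i)) (j : ι) :
    dDir (Pi.single j 1) (tensorProd u) = tensorProd (Function.update u j (deriv (u j))) := by
  funext x
  have hfactor (i : ι) : HasFDerivAt (fun y : ι → ℝ => u i (y i))
      (deriv (u i) (x i) • ContinuousLinearMap.proj (R := ℝ) (φ := fun _ : ι => ℝ) i) x :=
    (hu i (x i)).hasDerivAt.comp_hasFDerivAt x (hasFDerivAt_apply i x)
  have hprod := HasFDerivAt.finsetProd (u := Finset.univ) fun i _ => hfactor i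
  have hrest : ∏ i ∈ Finset.univ.erase j, u i (x i) =
      ∏ i ∈ Finset.univ.erase j, Function.update u j (deriv (u j)) i (x i) :=
    Finset.prod_congr rfl fun i hi => by rw [Function.update_of_ne (Finset.ne_of_mem_erase hi)]
  calc dDir (Pi.single j 1) (tensorProd u) x
      = (∏ i ∈ Finset.univ.erase j, u i (x i)) * deriv (u j) (x j) := by
        unfold dDir tensorProd
        rw [hprod.fderiv, sum_apply, Finset.sum_eq_single j]
        · simp
        · intro i _ hij
          simp [hij]
        · simp
    _ = tensorProd (Function.update u j (deriv (u j))) x := by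
        rw [hrest, tensorProd, ← Finset.prod_erase_mul _ _ (Finset.mem_univ j),
          Function.update_self]

variable {m : ℕ} {u : Fin m → ℝ → ℝ}

lemma dDir_tensorProd_iteratedDeriv (hu : ∀ i, ContDiff ℝ (⊤ : ℕ∞) (u i)) (e : Fin m → ℕ)
    (j : Fin m) :
    dDir (Pi.single j 1) (tensorProd fun i => iteratedDeriv (e i) (u i)) =
      tensorProd fun i => iteratedDeriv ((e + Pi.single j 1 : Fin m → ℕ) i) (u i) := by
  rw [dDir_tensorProd fun i => (hu i).differentiable_iteratedDeriv (e i)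
    (by exact_mod_cast ENat.natCast_lt_top (e i))]
  congr 1
  funext i
  rcases eq_or_ne i j with rfl | hij
  · simp [iteratedDeriv_succ]
  · simp [hij]

lemma derivAlong_append {E : Type*} [NormedAddCommGroup E] [NormedSpace ℝ E] (l l' : List E)
    (f : E → ℝ) : derivAlong (l ++ l') f = derivAlong l (derivAlong l' f) :=
  List.foldr_append

lemma derivAlong_replicate_tensorProd (hu : ∀ i, ContDiff ℝ (⊤ : ℕ∞) (u i)) (e : Fin m → ℕ)
    (j : Fin m) (r : ℕ) :
    derivAlong (List.replicate r (Pi.single j 1)) (tensorProd fun i => iteratedDeriv (e i) (u i)) =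
      tensorProd fun i => iteratedDeriv ((e + Pi.single j r : Fin m → ℕ) i) (u i) := by
  induction r with
  | zero => simp [derivAlong]
  | succ r ih =>
    rw [List.replicate_succ, ← List.singleton_append, derivAlong_append, ih, Pi.single_add,
      ← add_assoc]
    exact dDir_tensorProd_iteratedDeriv hu _ j

lemma derivAlong_flatMap_tensorProd (hu : ∀ i, ContDiff ℝ (⊤ : ℕ∞) (u i)) (k : Fin m → ℕ)
    (l : List (Fin m)) :
    derivAlong (l.flatMap fun i => List.replicate (k i) (Pi.single i 1)) (tensorProd u) =
      tensorProd fun i => iteratedDeriv ((l.map fun j => Pi.single j (k j)).sum i) (u i) := by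
  induction l with
  | nil => simp [derivAlong]
  | cons j l ih =>
    rw [List.flatMap_cons, derivAlong_append, ih, derivAlong_replicate_tensorProd hu,
      List.map_cons, List.sum_cons, add_comm]

lemma derivAlong_vecDirs_tensorProd (hu : ∀ i, ContDiff ℝ (⊤ : ℕ∞) (u i)) (k : Fin m → ℕ) :
    derivAlong (vecDirs m k) (tensorProd u) = tensorProd fun i => iteratedDeriv (k i) (u i) := by
  rw [vecDirs, derivAlong_flatMap_tensorProd hu, ← List.ofFn_eq_map, List.sum_ofFn,
    Finset.univ_sum_single]

lemma tsum_pi_prod (a : Fin m → ℕ → ℝ≥0∞) :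
    ∑' k : Fin m → ℕ, ∏ i, a i (k i) = ∏ i, ∑' r, a i r := by
  induction m with
  | zero => simp [tsum_fintype]
  | succ m ih =>
    calc ∑' k : Fin (m + 1) → ℕ, ∏ i, a i (k i)
        = ∑' x : ℕ × (Fin m → ℕ), a 0 x.1 * ∏ i : Fin m, a i.succ (x.2 i) := by
          rw [← (Fin.consEquiv fun _ : Fin (m + 1) => ℕ).tsum_eq]
          simp [Fin.consEquiv, Fin.prod_univ_succ]
      _ = ∏ i, ∑' r, a i r := by
          rw [ENNReal.tsum_prod', Fin.prod_univ_succ, ← ih, ← ENNReal.tsum_mul_right]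
          simp only [ENNReal.tsum_mul_left]

lemma ofReal_iSup_abs_le {X : Type*} (f : X → ℝ) :
    ENNReal.ofReal (⨆ x, |f x|) ≤ ⨆ x, ‖f x‖ₑ := by
  rcases eq_or_ne (⨆ x, ‖f x‖ₑ) ⊤ with htop | htop
  · simp [htop]
  refine ENNReal.ofReal_le_of_le_toReal (Real.iSup_le (fun x => ?_) ENNReal.toReal_nonneg)
  rw [← Real.norm_eq_abs, ← toReal_enorm]
  exact ENNReal.toReal_mono htop (le_iSup (fun x => ‖f x‖ₑ) x)

lemma iSup_enorm_tensorProd_le {ι : Type*} [Fintype ι] (w : ι → ℝ → ℝ) :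
    ⨆ x, ‖tensorProd w x‖ₑ ≤ ∏ i, ⨆ t, ‖w i t‖ₑ := by
  refine iSup_le fun x => ?_
  rw [tensorProd, Real.enorm_eq_ofReal_abs, Finset.abs_prod,
    ENNReal.ofReal_prod_of_nonneg fun i _ => abs_nonneg _]
  simp only [← Real.enorm_eq_ofReal_abs]
  exact Finset.prod_le_prod' fun i _ => le_iSup (fun t => ‖w i t‖ₑ) (x i)

lemma gevreyNormTor_tensorProd_le {α L : ℝ} (hL : 0 ≤ L) (hu : ∀ i, ContDiff ℝ (⊤ : ℕ∞) (u i)) :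
    gevreyNormTor m α L (tensorProd u) ≤ ∏ i, gevreyNorm α L (u i) := by
  simp only [gevreyNormTor, gevreyNorm]
  rw [← tsum_pi_prod]
  refine ENNReal.tsum_le_tsum fun k => ?_
  have hweight : L ^ (α * ((∑ i, k i : ℕ) : ℝ)) / ((∏ i, (k i).factorial : ℕ) : ℝ) ^ α =
      ∏ i, (L ^ k i / (k i).factorial) ^ α := by
    rw [Real.finsetProd_rpow _ _ fun i _ => by positivity, Finset.prod_div_distrib,
      Finset.prod_pow_eq_pow_sum, ← Nat.cast_prod, div_rpow (by positivity) (by positivity),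
      ← rpow_natCast L, ← rpow_mul hL, mul_comm]
  rw [hweight, derivAlong_vecDirs_tensorProd hu, ENNReal.ofReal_mul (by positivity),
    ENNReal.ofReal_prod_of_nonneg fun i _ => by positivity, Finset.prod_mul_distrib]
  gcongr
  exact (ofReal_iSup_abs_le _).trans (iSup_enorm_tensorProd_le _)

end TensorProduct

section Pulse

/-- A smooth `1`-periodic function with values in `[0, 1]` and value `1` at the integers.  Such
functions are the factors of the coupling function, which is thus critical wherever it takes the
value `0` or `1`. -/
structure IsPulse (u : ℝ → ℝ) : Prop where
  contDiff : ContDiff ℝ (⊤ : ℕ∞) u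
  periodic : Function.Periodic u 1
  mem_Icc : ∀ x, u x ∈ Set.Icc 0 1
  map_zero : u 0 = 1

lemma fderiv_eq_zero_of_mem_Icc {E : Type*} [NormedAddCommGroup E] [NormedSpace ℝ E] {f : E → ℝ}
    {a b : ℝ} {x : E} (hf : ∀ y, f y ∈ Set.Icc a b) (hx : f x = a ∨ f x = b) :
    fderiv ℝ f x = 0 := by
  rcases hx with hx | hx
  · exact IsLocalMin.fderiv_eq_zero (.of_forall fun y => hx.trans_le (hf y).1)
  · exact IsLocalMax.fderiv_eq_zero (.of_forall fun y => (hf y).2.trans_eq hx.symm)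

lemma tensorProd_mem_Icc {ι : Type*} [Fintype ι] {u : ι → ℝ → ℝ} (hu : ∀ i, IsPulse (u i))
    (x : ι → ℝ) : tensorProd u x ∈ Set.Icc 0 1 :=
  ⟨Finset.prod_nonneg fun i _ => ((hu i).mem_Icc _).1,
    Finset.prod_le_one (fun i _ => ((hu i).mem_Icc _).1) fun i _ => ((hu i).mem_Icc _).2⟩

lemma IsPulse.eq_of_coe_eq {u : ℝ → ℝ} (hu : IsPulse u) {x y : ℝ} (h : (x : T1) = y) :
    u x = u y := by
  rw [← hu.periodic.lift_coe x, h, hu.periodic.lift_coe]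

variable {m : ℕ} {u : Fin m → ℝ → ℝ}

lemma tensorProd_eq_of_projVec_eq (hu : ∀ i, IsPulse (u i)) {x y : Fin m → ℝ}
    (h : projVec m x = projVec m y) : tensorProd u x = tensorProd u y :=
  Finset.prod_congr rfl fun i _ => (hu i).eq_of_coe_eq (congrFun h i)

lemma tensorProd_add_single (hu : ∀ i, IsPulse (u i)) (x : Fin m → ℝ) (i : Fin m) :
    tensorProd u (x + Pi.single i 1) = tensorProd u x := by
  refine tensorProd_eq_of_projVec_eq hu (funext fun j => ?_)
  rcases eq_or_ne j i with rfl | hji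
  · simp [projVec]
  · simp [projVec, hji]

end Pulse

section Fejer

/-- The Fejér kernel of order `D`, normalised to take the value `1` at the integers. -/
def fejer (D : ℕ) (θ : ℝ) : ℝ :=
  (∑ p ∈ Finset.range D ×ˢ Finset.range D, cos (2 * π * ((p.1 : ℝ) - p.2) * θ)) / (D : ℝ) ^ 2

lemma fejer_eq_norm_sq (D : ℕ) (θ : ℝ) :
    fejer D θ = ‖∑ j ∈ Finset.range D, Complex.exp (2 * π * θ * Complex.I) ^ j‖ ^ 2 / D ^ 2 := by
  have hpow (j : ℕ) : Complex.exp (2 * π * θ * Complex.I) ^ j =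
      Complex.exp ((2 * π * j * θ : ℝ) * Complex.I) := by
    rw [← Complex.exp_nat_mul]
    push_cast
    ring_nf
  simp only [hpow, fejer, Complex.sq_norm, Complex.normSq_apply, Complex.re_sum, Complex.im_sum,
    Complex.exp_ofReal_mul_I_re, Complex.exp_ofReal_mul_I_im, Finset.sum_mul_sum,
    ← Finset.sum_product', ← Finset.sum_add_distrib, ← cos_sub]
  refine congrArg (· / (D : ℝ) ^ 2) (Finset.sum_congr rfl fun p _ => ?_)
  ring_nf

lemma contDiff_fejer (D : ℕ) {n : WithTop ℕ∞} : ContDiff ℝ n (fejer D) := by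
  unfold fejer
  fun_prop

lemma abs_iteratedDeriv_fejer_le (D k : ℕ) (θ : ℝ) :
    |iteratedDeriv k (fejer D) θ| ≤ (2 * π * D) ^ k := by
  have hderiv : iteratedDeriv k (fejer D) θ =
      (∑ p ∈ Finset.range D ×ˢ Finset.range D, (2 * π * ((p.1 : ℝ) - p.2)) ^ k *
        iteratedDeriv k cos (2 * π * ((p.1 : ℝ) - p.2) * θ)) / (D : ℝ) ^ 2 := by
    unfold fejer
    rw [iteratedDeriv_div_const, iteratedDeriv_fun_sum fun _ _ => by fun_prop]
    simp only [iteratedDeriv_comp_const_mul contDiff_cos]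
  have hterm (p : ℕ × ℕ) (hp : p ∈ Finset.range D ×ˢ Finset.range D) :
      |(2 * π * ((p.1 : ℝ) - p.2)) ^ k * iteratedDeriv k cos (2 * π * ((p.1 : ℝ) - p.2) * θ)| ≤
        (2 * π * D) ^ k := by
    have hdiff : |(p.1 : ℝ) - p.2| ≤ D := by
      simp only [Finset.mem_product, Finset.mem_range, ← Nat.cast_lt (α := ℝ)] at hp
      rw [abs_le]
      constructor <;> linarith [Nat.cast_nonneg (α := ℝ) p.1, Nat.cast_nonneg (α := ℝ) p.2]
    rw [abs_mul, abs_pow, abs_mul, abs_of_pos two_pi_pos]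
    exact (mul_le_of_le_one_right (by positivity) (abs_iteratedDeriv_cos_le_one k _)).trans
      (by gcongr)
  rw [hderiv, abs_div, abs_of_nonneg (sq_nonneg (D : ℝ))]
  refine div_le_of_le_mul₀ (by positivity) (by positivity)
    ((Finset.abs_sum_le_sum_abs _ _).trans ((Finset.sum_le_card_nsmul _ _ _ hterm).trans_eq ?_))
  simp [Finset.card_product]
  ring

lemma isPulse_fejer {D : ℕ} (hD : 0 < D) : IsPulse (fejer D) where
  contDiff := contDiff_fejer D
  periodic θ := by
    rw [fejer_eq_norm_sq, fejer_eq_norm_sq]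
    congr 5
    push_cast
    rw [mul_add, add_mul, Complex.exp_add]
    simp
  mem_Icc θ := by
    constructor
    · rw [fejer_eq_norm_sq]
      positivity
    · simpa using (le_abs_self _).trans (abs_iteratedDeriv_fejer_le D 0 θ)
  map_zero := by
    have : (D : ℝ) ≠ 0 := by positivity
    simp [fejer, Finset.card_product]
    field_simp

lemma fejer_div_eq_zero {D k : ℕ} (hk : ¬ D ∣ k) : fejer D (k / D) = 0 := by
  rcases Nat.eq_zero_or_pos D with rfl | hD
  · simp [fejer]
  have hroot := Complex.isPrimitiveRoot_exp D hD.ne'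
  have hz : Complex.exp (2 * π * (k / D : ℝ) * Complex.I) =
      Complex.exp (2 * π * Complex.I / D) ^ k := by
    rw [← Complex.exp_nat_mul]
    push_cast
    ring_nf
  have hz1 : Complex.exp (2 * π * Complex.I / D) ^ k ≠ 1 := by
    rwa [Ne, hroot.pow_eq_one_iff_dvd]
  rw [fejer_eq_norm_sq, hz, geom_sum_eq hz1, pow_right_comm, hroot.pow_eq_one]
  simp

lemma gevreyNorm_fejer_le {α L : ℝ} (hα : 1 < α) (hL : 0 ≤ L) (D : ℕ) :
    gevreyNorm α L (fejer D) ≤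
      ENNReal.ofReal (exp (α * L * (2 * π) ^ (1 / α) * (D : ℝ) ^ (1 / α))) := by
  refine (gevreyNorm_le_exp hα hL (by positivity) (abs_iteratedDeriv_fejer_le D)).trans_eq ?_
  rw [mul_rpow two_pi_pos.le (by positivity), ← mul_assoc]

end Fejer

section GevreyBump

lemma iteratedDeriv_re_ofReal {F : ℂ → ℂ} {x : ℝ} (hF : AnalyticAt ℂ F x) (k : ℕ) :
    iteratedDeriv k (fun y : ℝ => (F y).re) x = (iteratedDeriv k F x).re := by
  induction k generalizing x with
  | zero => simp
  | succ k ih =>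
    have hnear : iteratedDeriv k (fun y : ℝ => (F y).re) =ᶠ[nhds x]
        fun y : ℝ => (iteratedDeriv k F y).re :=
      (Complex.continuous_ofReal.continuousAt.eventually hF.eventually_analyticAt).mono
        fun y hy => ih hy
    have hFk : AnalyticAt ℂ (iteratedDeriv k F) x := by
      rw [iteratedDeriv_eq_iterate]
      exact hF.iterated_deriv k
    rw [iteratedDeriv_succ, iteratedDeriv_succ, hnear.deriv_eq]
    exact hFk.differentiableAt.hasDerivAt.real_of_complex.deriv

lemma abs_iteratedDeriv_re_ofReal_le {F : ℂ → ℂ} {x r C : ℝ} (hr : 0 < r)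
    (hF : ∀ z ∈ Metric.closedBall (x : ℂ) r, AnalyticAt ℂ F z)
    (hC : ∀ z ∈ Metric.closedBall (x : ℂ) r, ‖F z‖ ≤ C) (k : ℕ) :
    |iteratedDeriv k (fun y : ℝ => (F y).re) x| ≤ k.factorial * C / r ^ k := by
  rw [iteratedDeriv_re_ofReal (hF x (Metric.mem_closedBall_self hr.le))]
  have hdiff : DiffContOnCl ℂ F (Metric.ball (x : ℂ) r) := by
    refine DifferentiableOn.diffContOnCl fun z hz => ?_
    rw [closure_ball _ hr.ne'] at hz
    exact (hF z hz).differentiableAt.differentiableWithinAt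
  exact (Complex.abs_re_le_norm _).trans
    (Complex.norm_iteratedDeriv_le_of_forall_mem_sphere_norm_le k hr hdiff
      fun z hz => hC z (Metric.sphere_subset_closedBall hz))

lemma inv_pow_mul_exp_neg_inv_pow_le {s : ℕ} (hs : s ≠ 0) {u : ℝ} (hu : 0 < u) (k : ℕ) :
    (u ^ k)⁻¹ * exp (-((u ^ s)⁻¹ / 2)) ≤ 2 ^ k * (k.factorial : ℝ) ^ (1 / (s : ℝ)) := by
  set t := (u ^ s)⁻¹ with ht
  have hs1 : (1 : ℝ) ≤ s := by exact_mod_cast Nat.one_le_iff_ne_zero.2 hs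
  have hexp : (s * t / 2) ^ k ≤ exp (s * t / 2) * k.factorial :=
    (div_le_iff₀ (by positivity)).1 (pow_div_factorial_le_exp _ (by positivity) k)
  rw [← pow_le_pow_iff_left₀ (by positivity) (by positivity) hs]
  calc ((u ^ k)⁻¹ * exp (-(t / 2))) ^ s
      = t ^ k * exp (-(s * t / 2)) := by
        rw [mul_pow, ← exp_nat_mul, ht, inv_pow, inv_pow, ← pow_mul, ← pow_mul, mul_comm k s]
        ring_nf
    _ ≤ (2 * (s * t / 2)) ^ k * exp (-(s * t / 2)) := by
        have : 0 < t := by positivity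
        gcongr
        nlinarith
    _ ≤ 2 ^ k * (exp (s * t / 2) * k.factorial) * exp (-(s * t / 2)) := by
        rw [mul_pow]
        gcongr
    _ = 2 ^ k * k.factorial := by
        rw [mul_comm (exp _), ← mul_assoc, mul_assoc, ← exp_add, add_neg_cancel, exp_zero, mul_one]
    _ ≤ (2 ^ k) ^ s * k.factorial := by
        gcongr
        exact le_self_pow₀ (one_le_pow₀ one_le_two) hs
    _ = (2 ^ k * (k.factorial : ℝ) ^ (1 / (s : ℝ))) ^ s := by
        rw [mul_pow, one_div, rpow_inv_natCast_pow (by positivity) hs]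

lemma exists_half_le_re_inv_one_add_pow (s : ℕ) :
    ∃ δ : ℝ, 0 < δ ∧ δ ≤ 1 ∧ ∀ ζ : ℂ, ‖ζ‖ ≤ δ → 1 / 2 ≤ (((1 + ζ) ^ s)⁻¹).re := by
  have hcont : ContinuousAt (fun ζ : ℂ => (((1 + ζ) ^ s)⁻¹).re) 0 :=
    Complex.continuous_re.continuousAt.comp (ContinuousAt.inv₀ (by fun_prop) (by simp))
  obtain ⟨δ, hδ, hball⟩ := (Metric.nhds_basis_closedBall.eventually_iff).1
    (hcont.eventually_const_le (u := 1 / 2) (by norm_num))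
  refine ⟨min δ 1, by positivity, min_le_right _ _, fun ζ hζ => hball ?_⟩
  rw [mem_closedBall_zero_iff]
  exact hζ.trans (min_le_left _ _)

lemma norm_exp_neg_inv_pow_le {s : ℕ} {t : ℝ} (ht : 0 < t) {ζ : ℂ}
    (hζ : 1 / 2 ≤ (((1 + ζ) ^ s)⁻¹).re) :
    ‖Complex.exp (-((t * (1 + ζ)) ^ s)⁻¹)‖ ≤ exp (-((t ^ s)⁻¹ / 2)) := by
  have hre : (((t * (1 + ζ)) ^ s)⁻¹).re = (t ^ s)⁻¹ * (((1 + ζ) ^ s)⁻¹).re := by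
    rw [mul_pow, mul_inv, ← Complex.ofReal_pow, ← Complex.ofReal_inv, Complex.re_ofReal_mul]
  rw [Complex.norm_exp, Complex.neg_re, hre, div_eq_mul_one_div]
  gcongr

/-- Cauchy's estimate on a disc of radius `ρ * u x`, on which `U` stays close to `u x`: the loss
`(u x)⁻ᵏ` from the shrinking radius is absorbed by the flatness of `exp (-u⁻ˢ)`. -/
lemma abs_iteratedDeriv_expNegInvGlue_pow_le {s : ℕ} (hs : s ≠ 0) {U : ℂ → ℂ}
    (hU : Differentiable ℂ U) {u : ℝ → ℝ} (hUu : ∀ y : ℝ, U y = u y) (hu : Continuous u)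
    {δ ρ : ℝ} (hδ : ∀ ζ : ℂ, ‖ζ‖ ≤ δ → 1 / 2 ≤ (((1 + ζ) ^ s)⁻¹).re) (hρ : 0 < ρ) {x : ℝ}
    (hx : 0 < u x) (hball : ∀ z : ℂ, ‖z - x‖ ≤ ρ * u x → ‖U z - u x‖ ≤ δ * u x) (k : ℕ) :
    |iteratedDeriv k (fun y => expNegInvGlue (u y ^ s)) x| ≤
      (2 / ρ) ^ k * (k.factorial : ℝ) ^ (1 + 1 / (s : ℝ)) := by
  have hux : (u x : ℂ) ≠ 0 := by exact_mod_cast hx.ne'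
  have hfactor (z : ℂ) (hz : z ∈ Metric.closedBall (x : ℂ) (ρ * u x)) :
      ∃ ζ : ℂ, U z = u x * (1 + ζ) ∧ 1 / 2 ≤ (((1 + ζ) ^ s)⁻¹).re := by
    refine ⟨(U z - u x) / u x, by field_simp; ring, hδ _ ?_⟩
    rw [norm_div, Complex.norm_of_nonneg hx.le, div_le_iff₀ hx]
    exact hball z (mem_closedBall_iff_norm.1 hz)
  have hanalytic (z : ℂ) (hz : z ∈ Metric.closedBall (x : ℂ) (ρ * u x)) :
      AnalyticAt ℂ (fun z => Complex.exp (-(U z ^ s)⁻¹)) z := by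
    obtain ⟨ζ, hζ, hre⟩ := hfactor z hz
    have hne : U z ^ s ≠ 0 := by
      rw [hζ, mul_pow]
      refine mul_ne_zero (pow_ne_zero _ hux) fun h0 => ?_
      norm_num [h0] at hre
    exact (((hU.analyticAt z).pow s).inv hne).neg.cexp
  have hglue : (fun y => expNegInvGlue (u y ^ s)) =ᶠ[nhds x]
      fun y : ℝ => (Complex.exp (-(U y ^ s)⁻¹)).re := by
    filter_upwards [hu.continuousAt.eventually_const_lt hx] with y hy
    rw [expNegInvGlue, if_neg (by positivity : 0 < u y ^ s).not_ge, hUu, ← Complex.ofReal_pow,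
      ← Complex.ofReal_inv, ← Complex.ofReal_neg, Complex.exp_ofReal_re]
  have hnorm (z : ℂ) (hz : z ∈ Metric.closedBall (x : ℂ) (ρ * u x)) :
      ‖Complex.exp (-(U z ^ s)⁻¹)‖ ≤ exp (-((u x ^ s)⁻¹ / 2)) := by
    obtain ⟨ζ, hζ, hre⟩ := hfactor z hz
    rw [hζ]
    exact norm_exp_neg_inv_pow_le hx hre
  rw [hglue.iteratedDeriv_eq]
  calc _ ≤ k.factorial * exp (-((u x ^ s)⁻¹ / 2)) / (ρ * u x) ^ k :=
        abs_iteratedDeriv_re_ofReal_le (by positivity) hanalytic hnorm k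
    _ = k.factorial * (ρ ^ k)⁻¹ * ((u x ^ k)⁻¹ * exp (-((u x ^ s)⁻¹ / 2))) := by
        rw [mul_pow]
        field_simp
    _ ≤ k.factorial * (ρ ^ k)⁻¹ * (2 ^ k * (k.factorial : ℝ) ^ (1 / (s : ℝ))) :=
        mul_le_mul_of_nonneg_left (inv_pow_mul_exp_neg_inv_pow_le hs hx k) (by positivity)
    _ = (2 / ρ) ^ k * (k.factorial : ℝ) ^ (1 + 1 / (s : ℝ)) := by
        rw [rpow_add (by positivity), rpow_one, div_pow]
        ring

lemma abs_iteratedDeriv_le_of_eq_zero_of_notMem {f : ℝ → ℝ} (hf : ContDiff ℝ (⊤ : ℕ∞) f)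
    {S : Set ℝ} (hS : ∀ y ∉ S, f y = 0) {k : ℕ} {C : ℝ} (hC : 0 ≤ C)
    (hfS : ∀ x ∈ S, |iteratedDeriv k f x| ≤ C) (x : ℝ) : |iteratedDeriv k f x| ≤ C := by
  by_cases hx : x ∈ closure S
  · have hcont : Continuous (iteratedDeriv k f) :=
      hf.continuous_iteratedDeriv k (by exact_mod_cast le_top)
    exact closure_minimal hfS (isClosed_le hcont.abs continuous_const) hx
  · have hzero : f =ᶠ[nhds x] fun _ => 0 := by
      filter_upwards [isClosed_closure.isOpen_compl.mem_nhds hx] with y hy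
      exact hS y fun hyS => hy (subset_closure hyS)
    rwa [hzero.iteratedDeriv_eq k, iteratedDeriv_fun_const_zero, abs_zero]

lemma norm_cos_add_sub_cos_le (a : ℝ) {w : ℂ} (hw : ‖w‖ ≤ 1) :
    ‖Complex.cos (a + w) - Complex.cos a‖ ≤ 2 * ‖w‖ := by
  have hexp (z : ℂ) (hz : ‖z‖ = ‖w‖) : ‖Complex.exp z - 1‖ ≤ 2 * ‖w‖ :=
    hz ▸ Complex.norm_exp_sub_one_le (hz.trans_le hw)
  have hsplit : Complex.cos (a + w) - Complex.cos a =
      (Complex.exp (a * Complex.I) * (Complex.exp (w * Complex.I) - 1) +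
        Complex.exp ((-a : ℝ) * Complex.I) * (Complex.exp (-(w * Complex.I)) - 1)) / 2 := by
    simp only [Complex.cos, neg_mul, Complex.ofReal_neg, add_mul, neg_add, Complex.exp_add]
    ring
  calc ‖Complex.cos (a + w) - Complex.cos a‖
      ≤ (‖Complex.exp (w * Complex.I) - 1‖ + ‖Complex.exp (-(w * Complex.I)) - 1‖) / 2 := by
        rw [hsplit, norm_div, Complex.norm_ofNat]
        gcongr
        refine (norm_add_le _ _).trans_eq ?_
        rw [norm_mul, norm_mul, Complex.norm_exp_ofReal_mul_I, Complex.norm_exp_ofReal_mul_I,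
          one_mul, one_mul]
    _ ≤ 2 * ‖w‖ := by
        linarith [hexp (w * Complex.I) (by simp), hexp (-(w * Complex.I)) (by simp)]

/-- The bump `x ↦ exp (-(cos 2πx - cos 2πη)⁻ˢ)` on the circle, of Gevrey class `1 + 1/s` when `s`
is odd, vanishing on `[η, 1 - η]`. -/
def cosBump (s : ℕ) (η x : ℝ) : ℝ := expNegInvGlue ((cos (2 * π * x) - cos (2 * π * η)) ^ s)

lemma contDiff_cosBump (s : ℕ) (η : ℝ) : ContDiff ℝ (⊤ : ℕ∞) (cosBump s η) :=
  expNegInvGlue.contDiff.comp (by fun_prop)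

lemma cosBump_eq_zero_of_cos_le {s : ℕ} (hs : Odd s) {η x : ℝ}
    (hx : cos (2 * π * x) ≤ cos (2 * π * η)) : cosBump s η x = 0 :=
  expNegInvGlue.zero_of_nonpos (hs.pow_nonpos (sub_nonpos.2 hx))

lemma cos_le_cos_of_mem_Icc {η x : ℝ} (hη : 0 ≤ η) (hx : x ∈ Set.Icc η (1 - η)) :
    cos (2 * π * x) ≤ cos (2 * π * η) := by
  have hπ := pi_pos
  obtain ⟨hηx, hxη⟩ := hx
  rcases le_total x (1 / 2) with hhalf | hhalf
  · exact cos_le_cos_of_nonneg_of_le_pi (by positivity) (by nlinarith) (by gcongr)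
  · rw [← cos_two_pi_sub]
    exact cos_le_cos_of_nonneg_of_le_pi (by positivity) (by nlinarith) (by nlinarith)

lemma exists_abs_iteratedDeriv_cosBump_le {s : ℕ} (hs : Odd s) (η : ℝ) :
    ∃ R : ℝ, 0 ≤ R ∧ ∀ k x,
      |iteratedDeriv k (cosBump s η) x| ≤ R ^ k * (k.factorial : ℝ) ^ (1 + 1 / (s : ℝ)) := by
  obtain ⟨δ, hδ0, hδ1, hδ⟩ := exists_half_le_re_inv_one_add_pow s
  have hπ := pi_pos
  set ρ := δ / (4 * π) with hρ
  refine ⟨2 / ρ, by positivity, fun k => ?_⟩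
  refine abs_iteratedDeriv_le_of_eq_zero_of_notMem (contDiff_cosBump s η)
    (S := {x | cos (2 * π * η) < cos (2 * π * x)})
    (fun y hy => cosBump_eq_zero_of_cos_le hs (not_lt.1 hy)) (by positivity) fun x hx => ?_
  refine abs_iteratedDeriv_expNegInvGlue_pow_le hs.pos.ne'
    (U := fun z => Complex.cos (2 * π * z) - cos (2 * π * η)) (by fun_prop)
    (u := fun y => cos (2 * π * y) - cos (2 * π * η)) (fun y => by push_cast; rfl) (by fun_prop)
    hδ (by positivity) (sub_pos.2 hx) (fun z hz => ?_) k
  have hw : 2 * ‖2 * (π : ℂ) * (z - x)‖ ≤ δ * (cos (2 * π * x) - cos (2 * π * η)) := by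
    rw [norm_mul, norm_mul, Complex.norm_ofNat, Complex.norm_of_nonneg hπ.le]
    calc 2 * (2 * π * ‖z - x‖) ≤ 2 * (2 * π * (ρ * (cos (2 * π * x) - cos (2 * π * η)))) := by
          gcongr
      _ = δ * (cos (2 * π * x) - cos (2 * π * η)) := by rw [hρ]; field_simp; ring
  have hw1 : ‖2 * (π : ℂ) * (z - x)‖ ≤ 1 := by
    nlinarith [cos_le_one (2 * π * x), neg_one_le_cos (2 * π * η)]
  refine le_trans (le_of_eq ?_) ((norm_cos_add_sub_cos_le (2 * π * x) hw1).trans hw)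
  push_cast
  ring_nf

lemma exists_isPulse_gevreyNorm_lt_top {α L η : ℝ} (hα : 1 < α) (hL : 0 ≤ L) (hη : 0 < η)
    (hη' : η ≤ 1 / 2) :
    ∃ b : ℝ → ℝ, IsPulse b ∧ (∀ x ∈ Set.Icc η (1 - η), b x = 0) ∧ gevreyNorm α L b < ⊤ := by
  obtain ⟨r, hr⟩ := exists_nat_gt (1 / (α - 1))
  set s := 2 * r + 1 with hs
  have hodd : Odd s := ⟨r, hs⟩
  have hβ : 1 + 1 / (s : ℝ) < α := by
    have hrs : (r : ℝ) ≤ s := by exact_mod_cast (by omega : r ≤ s)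
    have := (one_div_lt (by linarith) (by positivity)).1 (hr.trans_le hrs)
    linarith
  obtain ⟨R, hR, hbound⟩ := exists_abs_iteratedDeriv_cosBump_le hodd η
  have hcos : cos (2 * π * η) < 1 := by
    rw [← cos_zero]
    exact cos_lt_cos_of_nonneg_of_le_pi le_rfl (by nlinarith [pi_pos]) (by positivity)
  have htop : 0 < cosBump s η 0 :=
    expNegInvGlue.pos_of_pos (pow_pos (by simpa using hcos) s)
  refine ⟨fun x => (cosBump s η 0)⁻¹ * cosBump s η x, ⟨contDiff_const.mul (contDiff_cosBump s η),
    fun x => ?_, fun x => ⟨mul_nonneg (by positivity) (expNegInvGlue.nonneg _), ?_⟩,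
    inv_mul_cancel₀ htop.ne'⟩, fun x hx => ?_, ?_⟩
  · simp only [cosBump, mul_add, mul_one, cos_add_two_pi]
  · rw [inv_mul_le_one₀ htop]
    refine expNegInvGlue.monotone (hodd.strictMono_pow.monotone ?_)
    simpa using cos_le_one (2 * π * x)
  · exact mul_eq_zero_of_right _
      (cosBump_eq_zero_of_cos_le hodd (cos_le_cos_of_mem_Icc hη.le hx))
  · refine gevreyNorm_lt_top (c := (cosBump s η 0)⁻¹) hL hR hβ fun k x => ?_
    rw [iteratedDeriv_const_mul_field, abs_mul, abs_of_pos (inv_pos.2 htop), mul_assoc]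
    gcongr
    exact hbound k x

end GevreyBump

section CircleRotation

/-- The time needed to travel from `0` to `θ` at speed `w`. -/
def travelTime (w : ℝ → ℝ) (θ : ℝ) : ℝ := ∫ x in (0 : ℝ)..θ, (w x)⁻¹

variable {w : ℝ → ℝ}

lemma travelTime_zero : travelTime w 0 = 0 := intervalIntegral.integral_same

lemma hasDerivAt_travelTime (hw : Continuous w) (hpos : ∀ x, 0 < w x) (θ : ℝ) :
    HasDerivAt (travelTime w) (w θ)⁻¹ θ :=
  ((hw.inv₀ fun x => (hpos x).ne').integral_hasStrictDerivAt 0 θ).hasDerivAt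

lemma strictMono_travelTime (hw : Continuous w) (hpos : ∀ x, 0 < w x) :
    StrictMono (travelTime w) :=
  strictMono_of_hasDerivAt_pos (hasDerivAt_travelTime hw hpos) fun x => inv_pos.2 (hpos x)

lemma travelTime_add_one (hw : Continuous w) (hpos : ∀ x, 0 < w x) (hper : w.Periodic 1) (θ : ℝ) :
    travelTime w (θ + 1) = travelTime w θ + travelTime w 1 := by
  have hint := (hw.inv₀ fun x => (hpos x).ne').intervalIntegrable (μ := MeasureTheory.volume)
  have hturn := (hper.comp (·⁻¹)).intervalIntegral_add_eq θ 0
  rw [zero_add] at hturn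
  exact (intervalIntegral.integral_add_adjacent_intervals (hint _ _) (hint _ _)).symm.trans
    (congrArg (travelTime w θ + ·) hturn)

lemma surjective_travelTime (hw : Continuous w) (hpos : ∀ x, 0 < w x) (hper : w.Periodic 1) :
    Function.Surjective (travelTime w) := by
  have hcont := hw.inv₀ fun x => (hpos x).ne'
  have hper' : Function.Periodic (fun x => (w x)⁻¹) 1 := hper.comp (·⁻¹)
  exact (continuous_iff_continuousAt.2 fun θ =>
      (hasDerivAt_travelTime hw hpos θ).continuousAt).surjective
    (hper'.tendsto_atTop_intervalIntegral_of_pos' (hcont.intervalIntegrable _ _)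
      (fun x => inv_pos.2 (hpos x)) one_pos)
    (hper'.tendsto_atBot_intervalIntegral_of_pos' (hcont.intervalIntegrable _ _)
      (fun x => inv_pos.2 (hpos x)) one_pos)

lemma abs_travelTime_le {η θ : ℝ} (hw : ∀ x, |x| ≤ η → 1 ≤ w x) (hθ : |θ| ≤ η) :
    |travelTime w θ| ≤ |θ| := by
  have hbound : ∀ x ∈ Set.uIoc 0 θ, ‖(w x)⁻¹‖ ≤ 1 := fun x hx => by
    have h1 : 1 ≤ w x := hw x (by simpa using (Set.abs_sub_left_of_mem_uIcc
      (Set.uIoc_subset_uIcc hx)).trans (by simpa using hθ))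
    rw [norm_of_nonneg (inv_nonneg.2 (by linarith))]
    exact inv_le_one_of_one_le₀ h1
  simpa [travelTime] using intervalIntegral.norm_integral_le_of_norm_le_const hbound

lemma exists_travelTime_inverse (hw : Continuous w) (hpos : ∀ x, 0 < w x) (hper : w.Periodic 1) :
    ∃ Θ : ℝ → ℝ, Monotone Θ ∧ (∀ θ, Θ (travelTime w θ) = θ) ∧ (∀ τ, travelTime w (Θ τ) = τ) ∧
      ∀ τ, HasDerivAt Θ (w (Θ τ)) τ := by
  let e := (strictMono_travelTime hw hpos).orderIsoOfSurjective _
    (surjective_travelTime hw hpos hper)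
  refine ⟨e.symm, e.symm.monotone, e.symm_apply_apply, e.apply_symm_apply, fun τ => ?_⟩
  simpa only [inv_inv] using HasDerivAt.of_local_left_inverse e.symm.continuous.continuousAt
    (hasDerivAt_travelTime hw hpos _) (inv_pos.2 (hpos _)).ne'
    (Filter.Eventually.of_forall e.apply_symm_apply)

end CircleRotation

section Pendulum

/-- The speed at angle `θ` of the pendulum `½v² - cos 2πθ` on the energy level `1 + exp r`, which
lies above the separatrix. -/
def pendulumSpeed (r θ : ℝ) : ℝ := √(2 * (1 + exp r + cos (2 * π * θ)))

lemma two_mul_one_add_exp_add_cos_pos (r x : ℝ) : 0 < 2 * (1 + exp r + cos x) := by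
  linarith [neg_one_le_cos x, exp_pos r]

lemma pendulumSpeed_pos (r θ : ℝ) : 0 < pendulumSpeed r θ :=
  sqrt_pos.2 (two_mul_one_add_exp_add_cos_pos r _)

lemma continuous_uncurry_pendulumSpeed : Continuous (Function.uncurry pendulumSpeed) := by
  unfold Function.uncurry pendulumSpeed
  fun_prop

lemma continuous_pendulumSpeed (r : ℝ) : Continuous (pendulumSpeed r) :=
  continuous_uncurry_pendulumSpeed.comp (Continuous.prodMk_right r)

lemma periodic_pendulumSpeed (r : ℝ) : Function.Periodic (pendulumSpeed r) 1 := fun θ => by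
  simp only [pendulumSpeed]
  rw [mul_add (2 * π), mul_one, cos_add_two_pi]

lemma hasDerivAt_pendulumSpeed (r θ : ℝ) :
    HasDerivAt (pendulumSpeed r) (-(2 * π * sin (2 * π * θ)) / pendulumSpeed r θ) θ := by
  have hpos := two_mul_one_add_exp_add_cos_pos r (2 * π * θ)
  have henergy : HasDerivAt (fun y => 2 * (1 + exp r + cos (2 * π * y)))
      (2 * (-sin (2 * π * θ) * (2 * π * 1))) θ :=
    ((((hasDerivAt_id θ).const_mul (2 * π)).cos).const_add _).const_mul 2
  refine (henergy.sqrt hpos.ne').congr_deriv ?_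
  rw [pendulumSpeed]
  field_simp

lemma one_le_pendulumSpeed {r θ : ℝ} (h : 0 ≤ exp r + cos (2 * π * θ)) : 1 ≤ pendulumSpeed r θ :=
  one_le_sqrt.2 (by linarith)

lemma pendulumSpeed_le {r θ : ℝ} (h : exp r ≤ (θ - 1 / 2) ^ 2) :
    pendulumSpeed r θ ≤ 7 * |θ - 1 / 2| := by
  have hcos : cos (2 * π * θ) = -cos (2 * π * (θ - 1 / 2)) := by
    rw [← cos_add_pi]
    ring_nf
  have hparabola := one_sub_sq_div_two_le_cos (x := 2 * π * (θ - 1 / 2))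
  have hπ : π ^ 2 * (θ - 1 / 2) ^ 2 ≤ 10 * (θ - 1 / 2) ^ 2 := by
    gcongr
    nlinarith [pi_lt_d2, pi_pos]
  refine sqrt_le_iff.2 ⟨by positivity, ?_⟩
  rw [hcos, mul_pow, sq_abs]
  nlinarith

lemma travelTime_pendulumSpeed_zero_le : travelTime (pendulumSpeed 0) 1 ≤ 1 := by
  have hspeed (x : ℝ) (_ : |x| ≤ 1) : 1 ≤ pendulumSpeed 0 x :=
    one_le_pendulumSpeed (by linarith [exp_zero, neg_one_le_cos (2 * π * x)])
  simpa using (le_abs_self _).trans (abs_travelTime_le hspeed (θ := 1) (by simp))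

lemma le_travelTime_pendulumSpeed {δ : ℝ} (hδ : 0 < δ) (hδ' : δ ≤ 1 / 2) :
    -log (2 * δ) / 7 ≤ travelTime (pendulumSpeed (log (δ ^ 2))) 1 := by
  set w := pendulumSpeed (log (δ ^ 2))
  have hpos (x : ℝ) : 0 < w x := pendulumSpeed_pos _ x
  have hint (a b : ℝ) : IntervalIntegrable (fun x => (w x)⁻¹) MeasureTheory.volume a b :=
    ((continuous_pendulumSpeed _).inv₀ fun x => (hpos x).ne').intervalIntegrable a b
  calc -log (2 * δ) / 7
      = ∫ x in (1 / 2 + δ)..1, 7⁻¹ * (x - 1 / 2)⁻¹ := by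
        rw [intervalIntegral.integral_const_mul,
          intervalIntegral.integral_comp_sub_right (fun x => x⁻¹), add_sub_cancel_left,
          integral_inv_of_pos hδ (by norm_num), ← log_inv]
        ring_nf
    _ ≤ ∫ x in (1 / 2 + δ)..1, (w x)⁻¹ := by
        refine intervalIntegral.integral_mono_on (by linarith) ?_ (hint _ _) fun x hx => ?_
        · refine ContinuousOn.intervalIntegrable fun x hx => ?_
          rw [Set.uIcc_of_le (by linarith)] at hx
          have : x - 1 / 2 ≠ 0 := by linarith [hx.1]
          fun_prop (disch := assumption)
        · have hx' : δ ≤ x - 1 / 2 := by linarith [hx.1]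
          rw [← mul_inv, ← abs_of_pos (hδ.trans_le hx')]
          refine inv_anti₀ (hpos x) (pendulumSpeed_le ?_)
          rw [exp_log (by positivity)]
          gcongr
    _ ≤ travelTime w 1 :=
        intervalIntegral.integral_mono_interval (by linarith) (by linarith) le_rfl
          (Filter.Eventually.of_forall fun x => inv_nonneg.2 (hpos x).le) (hint _ _)

lemma exists_travelTime_pendulumSpeed_eq {T : ℝ} (hT : 1 ≤ T) :
    ∃ r, travelTime (pendulumSpeed r) 1 = T := by
  have hcont : Continuous fun r => travelTime (pendulumSpeed r) 1 :=
    intervalIntegral.continuous_parametric_intervalIntegral_of_continuous'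
      (f := fun r x => (pendulumSpeed r x)⁻¹)
      (continuous_uncurry_pendulumSpeed.inv₀ fun x => (pendulumSpeed_pos x.1 x.2).ne') 0 1
  have hslow := le_travelTime_pendulumSpeed (δ := exp (-(7 * T)) / 2) (by positivity)
    (by linarith [exp_le_one_iff.2 (by linarith : -(7 * T) ≤ 0)])
  rw [mul_div_cancel₀ _ two_ne_zero, log_exp, neg_neg, mul_div_cancel_left₀ _ (by norm_num)]
    at hslow
  exact mem_range_of_exists_le_of_exists_ge hcont
    ⟨0, travelTime_pendulumSpeed_zero_le.trans hT⟩ ⟨_, hslow⟩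

/-- A motion `(Θ, v)` of the pendulum `½v² - cos 2πθ`, lifted to the line, which starts at the
bottom and turns once in each period `T`.  The field `mem_Icc` says that the motion is fast near
the bottom: it leaves the `η`-neighbourhood of `ℤ` within time `η`. -/
structure IsPendulumRotation (T : ℝ) (Θ v : ℝ → ℝ) : Prop where
  map_zero : Θ 0 = 0
  map_add_period : ∀ τ, Θ (τ + T) = Θ τ + 1
  speed_add_period : ∀ τ, v (τ + T) = v τ
  hasDerivAt_angle : ∀ τ, HasDerivAt Θ (v τ) τ
  hasDerivAt_speed : ∀ τ, HasDerivAt v (-(2 * π * sin (2 * π * Θ τ))) τ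
  mem_Icc : ∀ η ∈ Set.Icc (0 : ℝ) (1 / 4), ∀ τ ∈ Set.Icc η (T - η), Θ τ ∈ Set.Icc η (1 - η)

lemma one_le_pendulumSpeed_of_abs_le (r : ℝ) {x : ℝ} (hx : |x| ≤ 1 / 4) :
    1 ≤ pendulumSpeed r x := by
  obtain ⟨h1, h2⟩ := abs_le.1 hx
  have hcos : 0 ≤ cos (2 * π * x) :=
    cos_nonneg_of_mem_Icc ⟨by nlinarith [pi_pos], by nlinarith [pi_pos]⟩
  exact one_le_pendulumSpeed (by linarith [exp_pos r])

lemma exists_isPendulumRotation {T : ℝ} (hT : 1 ≤ T) : ∃ Θ v, IsPendulumRotation T Θ v := by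
  obtain ⟨r, hr⟩ := exists_travelTime_pendulumSpeed_eq hT
  have hw := continuous_pendulumSpeed r
  have hpos := pendulumSpeed_pos r
  have hper := periodic_pendulumSpeed r
  obtain ⟨Θ, hmono, hleft, hright, hderiv⟩ := exists_travelTime_inverse hw hpos hper
  have hturn (θ : ℝ) : travelTime (pendulumSpeed r) (θ + 1) =
      travelTime (pendulumSpeed r) θ + T := by rw [travelTime_add_one hw hpos hper, hr]
  have hΘ (τ : ℝ) : Θ (τ + T) = Θ τ + 1 := by rw [← hleft (Θ τ + 1), hturn, hright]
  refine ⟨Θ, fun τ => pendulumSpeed r (Θ τ), by simpa only [travelTime_zero] using hleft 0, hΘ,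
    fun τ => by rw [hΘ, hper], hderiv, fun τ => ?_, fun η hη τ hτ => ?_⟩
  · refine ((hasDerivAt_pendulumSpeed r (Θ τ)).comp τ (hderiv τ)).congr_deriv ?_
    rw [div_mul_cancel₀ _ (hpos _).ne']
  · have hfast (x : ℝ) (hx : |x| ≤ η) : 1 ≤ pendulumSpeed r x :=
      one_le_pendulumSpeed_of_abs_le r (hx.trans hη.2)
    have hη0 : |η| = η := abs_of_nonneg hη.1
    have hstart := abs_le.1 (abs_travelTime_le hfast (θ := η) hη0.le)
    have hend := abs_le.1 (abs_travelTime_le hfast (θ := -η) (by rw [abs_neg, hη0]))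
    have hlast := hturn (-η)
    rw [abs_neg] at hend
    rw [hη0] at hstart hend
    rw [neg_add_eq_sub] at hlast
    constructor
    · rw [← hleft η]
      exact hmono (hstart.2.trans hτ.1)
    · rw [← hleft (1 - η)]
      exact hmono (by linarith [hτ.2, hend.1])

end Pendulum

section GlobalODE

variable {E : Type*} [NormedAddCommGroup E] [NormedSpace ℝ E] [CompleteSpace E] {f : E → E}
  {K : NNReal}

lemma exists_hasDerivAt_Ioo_of_lipschitzWith (hf : LipschitzWith K f) (x : E) :
    ∃ γ : ℝ → E, γ 0 = x ∧ ∀ t ∈ Set.Ioo (-(1 / (2 * (K + 1)) : ℝ)) (1 / (2 * (K + 1))),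
      HasDerivAt γ (f (γ t)) t := by
  set ε : ℝ := 1 / (2 * (K + 1)) with hε
  have hε0 : 0 < ε := by positivity
  have hbound : ∀ y ∈ Metric.closedBall x (‖f x‖₊ / (K + 1) : NNReal),
      ‖f y‖ ≤ (2 * ‖f x‖₊ : NNReal) := fun y hy => by
    rw [mem_closedBall_iff_norm, NNReal.coe_div, coe_nnnorm] at hy
    push_cast at hy ⊢
    calc ‖f y‖ ≤ ‖f x‖ + ‖f y - f x‖ := norm_le_insert' _ _
      _ ≤ ‖f x‖ + (K + 1) * (‖f x‖ / (K + 1)) := by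
        grw [hf.norm_sub_le y x, hy]
        gcongr
        exact le_add_of_nonneg_right zero_le_one
      _ = 2 * ‖f x‖ := by field_simp; ring
  have hpl : IsPicardLindelof (fun _ => f) (tmin := -ε) (tmax := ε)
      ⟨0, by constructor <;> linarith⟩ x (‖f x‖₊ / (K + 1)) 0 (2 * ‖f x‖₊) K := by
    refine .of_time_independent hbound hf.lipschitzOnWith (le_of_eq ?_)
    simp only [sub_zero, zero_sub, neg_neg, max_self, hε]
    push_cast
    field_simp
    simp
  obtain ⟨γ, h0, hγ⟩ := hpl.exists_eq_forall_mem_Icc_hasDerivWithinAt₀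
  exact ⟨γ, h0, fun t ht =>
    (hγ t (Set.Ioo_subset_Icc_self ht)).hasDerivAt (Icc_mem_nhds ht.1 ht.2)⟩

open scoped Manifold in
lemma exists_forall_hasDerivAt_of_lipschitzWith (hf : LipschitzWith K f) (hf' : ContDiff ℝ 1 f)
    (x : E) : ∃ γ : ℝ → E, γ 0 = x ∧ ∀ t, HasDerivAt γ (f (γ t)) t := by
  obtain ⟨γ, h0, hγ⟩ := exists_isMIntegralCurve_of_isMIntegralCurveOn (I := 𝓘(ℝ, E))
    (v := fun y => (f y : TangentSpace 𝓘(ℝ, E) y)) (contMDiff_vectorSpace_iff_contDiff.2 hf')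
    (ε := 1 / (2 * (K + 1))) (by positivity) (fun y => by
      obtain ⟨γ, h0, hγ⟩ := exists_hasDerivAt_Ioo_of_lipschitzWith hf y
      exact ⟨γ, h0, fun t ht => (hγ t ht).hasFDerivAt.hasMFDerivAt.hasMFDerivWithinAt⟩) x
  have hderiv (t : ℝ) : HasFDerivAt γ ((1 : ℝ →L[ℝ] ℝ).smulRight (f (γ t))) t :=
    hasMFDerivAt_iff_hasFDerivAt.1 (hγ t)
  exact ⟨γ, h0, fun t => by simpa using (hderiv t).hasDerivAt⟩

end GlobalODE

section HamiltonianFlow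

variable {m : ℕ} {H : Ann m → ℝ} {K : NNReal}

/-- The Hamiltonian vector field `(∂H/∂I, -∂H/∂θ)` of `H`, lifted to the universal cover of the
annulus. -/
def hamField (m : ℕ) (H : Ann m → ℝ) (x : (Fin m → ℝ) × (Fin m → ℝ)) :
    (Fin m → ℝ) × (Fin m → ℝ) :=
  (fun i => fderiv ℝ (H ∘ projAnn m) x (0, Pi.single i 1),
    fun i => -fderiv ℝ (H ∘ projAnn m) x (Pi.single i 1, 0))

lemma hasDerivAt_hamField_iff {c : ℝ → (Fin m → ℝ) × (Fin m → ℝ)} {t : ℝ} :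
    HasDerivAt c (hamField m H (c t)) t ↔ ∀ i,
      HasDerivAt (fun s => (c s).1 i)
        (fderiv ℝ (H ∘ projAnn m) (c t) ((0 : Fin m → ℝ), Pi.single i 1)) t ∧
      HasDerivAt (fun s => (c s).2 i)
        (-(fderiv ℝ (H ∘ projAnn m) (c t) (Pi.single i 1, (0 : Fin m → ℝ)))) t := by
  refine ⟨fun h i => ⟨?_, ?_⟩, fun h => ?_⟩
  · simpa [hamField] using hasDerivAt_pi.1 h.hasFDerivAt.fst.hasDerivAt i
  · simpa [hamField] using hasDerivAt_pi.1 h.hasFDerivAt.snd.hasDerivAt i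
  · exact (hasDerivAt_pi.2 fun i => (h i).1).prodMk (hasDerivAt_pi.2 fun i => (h i).2)

lemma exists_int_of_coe_eq {x y : ℝ} (h : (x : T1) = y) : ∃ k : ℤ, x = y + k := by
  rw [← sub_eq_zero, ← AddCircle.coe_sub, AddCircle.coe_eq_zero_iff] at h
  obtain ⟨k, hk⟩ := h
  exact ⟨k, by rw [← sub_eq_iff_eq_add', ← hk, zsmul_one]⟩

lemma exists_int_of_projAnn_eq {x y : (Fin m → ℝ) × (Fin m → ℝ)}
    (h : projAnn m x = projAnn m y) : ∃ s : Fin m → ℤ, x = y + (fun i => (s i : ℝ), 0) := by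
  choose s hs using fun i => exists_int_of_coe_eq (congrFun (congrArg Prod.fst h) i)
  exact ⟨s, Prod.ext (funext hs) ((congrArg Prod.snd h).trans (add_zero _).symm)⟩

lemma projAnn_add_int (x : (Fin m → ℝ) × (Fin m → ℝ)) (s : Fin m → ℤ) :
    projAnn m (x + (fun i => (s i : ℝ), 0)) = projAnn m x := by
  ext i <;> simp [projAnn]

lemma hamField_add_int (x : (Fin m → ℝ) × (Fin m → ℝ)) (s : Fin m → ℤ) :
    hamField m H (x + (fun i => (s i : ℝ), 0)) = hamField m H x := by
  simp only [hamField, ← fderiv_comp_add_right, Function.comp_apply, projAnn_add_int]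
  rfl

lemma projAnn_eq_of_hasDerivAt_hamField (hH : LipschitzWith K (hamField m H))
    {c d : ℝ → (Fin m → ℝ) × (Fin m → ℝ)} (hc : ∀ t, HasDerivAt c (hamField m H (c t)) t)
    (hd : ∀ t, HasDerivAt d (hamField m H (d t)) t) (h0 : projAnn m (c 0) = projAnn m (d 0))
    (t : ℝ) : projAnn m (c t) = projAnn m (d t) := by
  obtain ⟨s, hs⟩ := exists_int_of_projAnn_eq h0
  have hshift : c = fun t => d t + (fun i => (s i : ℝ), 0) :=
    ODE_solution_unique_univ (v := fun _ => hamField m H) (s := fun _ => Set.univ) (K := K)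
      (fun _ => hH.lipschitzOnWith) (fun t => ⟨hc t, Set.mem_univ _⟩)
      (fun t => ⟨by rw [hamField_add_int]; exact (hd t).add_const _, Set.mem_univ _⟩) hs
  rw [hshift, projAnn_add_int]

lemma coe_rep (θ : T1) : ((rep θ : ℝ) : T1) = θ := (AddCircle.equivIco (1 : ℝ) 0).symm_apply_apply θ

lemma exists_isHamFlow (hH : LipschitzWith K (hamField m H)) (hH' : ContDiff ℝ 1 (hamField m H)) :
    ∃ Φ, IsHamFlow m H Φ := by
  choose c hc0 hc using exists_forall_hasDerivAt_of_lipschitzWith hH hH'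
  let lift (x : Ann m) : (Fin m → ℝ) × (Fin m → ℝ) := (fun i => rep (x.1 i), x.2)
  have hlift (x : Ann m) : projAnn m (lift x) = x := Prod.ext (funext fun i => coe_rep _) rfl
  refine ⟨fun t x => projAnn m (c (lift x) t), fun x => ?_, fun s t x => ?_, fun x =>
    ⟨c (lift x), fun _ => rfl, fun t => hasDerivAt_hamField_iff.1 (hc _ t)⟩⟩
  · simp only [hc0, hlift]
  · refine projAnn_eq_of_hasDerivAt_hamField hH (c := fun s => c (lift x) (s + t))
      (fun s => (hc (lift x) (s + t)).comp_add_const s t) (hc _) ?_ s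
    simp only [hc0, hlift, zero_add]

lemma IsHamFlow.iterate_eq {Φ : ℝ → Ann m → Ann m} (hΦ : IsHamFlow m H Φ) (k : ℕ) (x : Ann m) :
    (Φ 1)^[k] x = Φ k x := by
  induction k with
  | zero => simp [hΦ.1]
  | succ k ih => rw [Function.iterate_succ_apply', ih, ← hΦ.2.1, Nat.cast_succ, add_comm]

lemma IsHamFlow.iterate_projAnn {Φ : ℝ → Ann m → Ann m} (hΦ : IsHamFlow m H Φ)
    (hH : LipschitzWith K (hamField m H)) {d : ℝ → (Fin m → ℝ) × (Fin m → ℝ)}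
    (hd : ∀ t, HasDerivAt d (hamField m H (d t)) t) (k : ℕ) :
    (Φ 1)^[k] (projAnn m (d 0)) = projAnn m (d k) := by
  obtain ⟨c, hc, hcderiv⟩ := hΦ.2.2 (projAnn m (d 0))
  rw [hΦ.iterate_eq, ← hc]
  exact projAnn_eq_of_hasDerivAt_hamField hH (fun t => hasDerivAt_hamField_iff.2 (hcderiv t)) hd
    ((hc 0).trans (hΦ.1 _)) k

end HamiltonianFlow

section PendulumRotator

variable {m : ℕ}

/-- The Hamiltonian `½ ∑ Iᵢ² - κ cos 2πθ_{i₀}`: a pendulum in the degree of freedom `i₀`, uncoupled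
from free rotators in the others. -/
def pendulumRotator (κ : ℝ) (i₀ : Fin m) : Ann m → ℝ :=
  fun z => (1 / 2) * (∑ i, (z.2 i) ^ 2) + κ * (-cosC (z.1 i₀))

lemma cosC_coe (x : ℝ) : cosC (x : T1) = cos (2 * π * x) := by
  have hint : 2 * π * (⌊x⌋ : ℝ) = ⌊x⌋ * (2 * π) := by ring
  rw [cosC, rep, AddCircle.coe_equivIco_mk_apply, div_one, mul_one, Int.fract, mul_sub, hint,
    cos_sub_int_mul_two_pi]

lemma fderiv_pendulumRotator (κ : ℝ) (i₀ : Fin m) (x y : (Fin m → ℝ) × (Fin m → ℝ)) :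
    fderiv ℝ (pendulumRotator κ i₀ ∘ projAnn m) x y =
      ∑ i, x.2 i * y.2 i + κ * (2 * π * sin (2 * π * x.1 i₀)) * y.1 i₀ := by
  have hcomp : pendulumRotator κ i₀ ∘ projAnn m = fun x : (Fin m → ℝ) × (Fin m → ℝ) =>
      (1 / 2) * (∑ i, (x.2 i) ^ 2) + κ * (-cos (2 * π * x.1 i₀)) :=
    funext fun x => by simp only [pendulumRotator, projAnn, Function.comp, cosC_coe]
  have haction (i : Fin m) := (hasFDerivAt_apply (𝕜 := ℝ) i x.2).comp x (hasFDerivAt_snd (𝕜 := ℝ))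
  have hangle (i : Fin m) := (hasFDerivAt_apply (𝕜 := ℝ) i x.1).comp x (hasFDerivAt_fst (𝕜 := ℝ))
  have hderiv := ((HasFDerivAt.fun_sum (u := Finset.univ) fun i _ => (haction i).pow 2).const_mul
    (1 / 2)).add (((hangle i₀).const_mul (2 * π)).cos.neg.const_mul κ)
  rw [hcomp]
  refine (DFunLike.congr_fun hderiv.fderiv y).trans ?_
  simp [Finset.mul_sum, mul_assoc, mul_left_comm (sin _)]

lemma hamField_pendulumRotator (κ : ℝ) (i₀ : Fin m) (x : (Fin m → ℝ) × (Fin m → ℝ)) :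
    hamField m (pendulumRotator κ i₀) x =
      (x.2, Pi.single i₀ (-(κ * (2 * π * sin (2 * π * x.1 i₀))))) := by
  ext i
  · simp [hamField, fderiv_pendulumRotator, Pi.single_apply]
  · rcases eq_or_ne i i₀ with rfl | hi
    · simp [hamField, fderiv_pendulumRotator]
    · simp [hamField, fderiv_pendulumRotator, hi, hi.symm]

lemma hamField_pendulumRotator_eq_linear_comp_sin (κ : ℝ) (i₀ : Fin m) :
    ∃ (A : ℝ →L[ℝ] Fin m → ℝ) (l : (Fin m → ℝ) × (Fin m → ℝ) →L[ℝ] ℝ),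
      hamField m (pendulumRotator κ i₀) = fun x => (x.2, A (sin (l x))) := by
  refine ⟨.toSpanSingleton ℝ (Pi.single i₀ (-(κ * (2 * π)))),
    (2 * π) • .comp (.proj (R := ℝ) (φ := fun _ : Fin m => ℝ) i₀) (.fst ℝ _ _), funext fun x => ?_⟩
  rw [hamField_pendulumRotator]
  congr 1
  simp [← Pi.single_smul, mul_comm, mul_assoc]

lemma contDiff_hamField_pendulumRotator (κ : ℝ) (i₀ : Fin m) :
    ContDiff ℝ 1 (hamField m (pendulumRotator κ i₀)) := by
  obtain ⟨A, l, h⟩ := hamField_pendulumRotator_eq_linear_comp_sin κ i₀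
  rw [h]
  fun_prop

lemma exists_lipschitzWith_hamField_pendulumRotator (κ : ℝ) (i₀ : Fin m) :
    ∃ K, LipschitzWith K (hamField m (pendulumRotator κ i₀)) := by
  obtain ⟨A, l, h⟩ := hamField_pendulumRotator_eq_linear_comp_sin κ i₀
  rw [h]
  exact ⟨_, LipschitzWith.prod_snd.prodMk (A.lipschitz.comp (lipschitzWith_sin.comp l.lipschitz))⟩

lemma exists_isHamFlow_pendulumRotator (κ : ℝ) (i₀ : Fin m) :
    ∃ Φ, IsHamFlow m (pendulumRotator κ i₀) Φ := by
  obtain ⟨K, hK⟩ := exists_lipschitzWith_hamField_pendulumRotator κ i₀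
  exact exists_isHamFlow hK (contDiff_hamField_pendulumRotator κ i₀)

end PendulumRotator

section Primes

lemma nth_prime_mono : Monotone (Nat.nth Nat.Prime) :=
  Nat.nth_monotone Nat.infinite_setOfPred_prime

lemma prod_nth_prime_pos (s : Finset ℕ) : 0 < ∏ j ∈ s, Nat.nth Nat.Prime j :=
  Finset.prod_pos fun j _ => (Nat.prime_nth_prime j).pos

lemma prod_nth_prime_dvd {s : Finset ℕ} {k : ℕ} (h : ∀ j ∈ s, Nat.nth Nat.Prime j ∣ k) :
    ∏ j ∈ s, Nat.nth Nat.Prime j ∣ k := by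
  rw [← Finset.prod_image (f := fun p => p) (Nat.nth_injective Nat.infinite_setOfPred_prime).injOn]
  refine Finset.prod_primes_dvd k (fun p hp => ?_) fun p hp => ?_ <;>
    obtain ⟨j, hj, rfl⟩ := Finset.mem_image.1 hp
  exacts [(Nat.prime_nth_prime j).prime, h j hj]

lemma nth_prime_six : Nat.nth Nat.Prime 6 = 17 :=
  Nat.nth_count (p := Nat.Prime) (by norm_num : Nat.Prime 17) ▸ by congr 1

lemma primeCounting_nth_prime (k : ℕ) : Nat.primeCounting (Nat.nth Nat.Prime k) = k + 1 := by
  have hbelow := Nat.primeCounting'_nth_eq k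
  rw [Nat.primeCounting'] at hbelow
  rw [Nat.primeCounting, Nat.primeCounting', Nat.count_succ, hbelow,
    if_pos (Nat.prime_nth_prime k)]

lemma nth_prime_mul_log_two_le (k : ℕ) :
    Nat.nth Nat.Prime k * log 2 ≤ (k + 3) * log (Nat.nth Nat.Prime k) := by
  set p := Nat.nth Nat.Prime k
  have hp2 : (2 : ℝ) ≤ p := mod_cast (Nat.prime_nth_prime k).two_le
  have hchebyshev := Chebyshev.pi_ge p
  rw [primeCounting_nth_prime, div_le_iff₀ (log_pos (by linarith))] at hchebyshev
  push_cast at hchebyshev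
  have hlog : log (p + 1) ≤ 2 * log p := by
    rw [← Nat.cast_two, ← log_pow]
    exact log_le_log (by linarith) (by nlinarith)
  linarith

lemma exists_nth_prime_rpow_le {γ : ℝ} (hγ : γ < 1) :
    ∃ C > 0, ∀ k : ℕ, (Nat.nth Nat.Prime k : ℝ) ^ γ ≤ C * (k + 1) := by
  have hγ' : 0 < 1 - γ := sub_pos.2 hγ
  refine ⟨3 / ((1 - γ) * log 2), by positivity, fun k => ?_⟩
  set p := Nat.nth Nat.Prime k
  have hp0 : (0 : ℝ) < p := mod_cast (Nat.prime_nth_prime k).pos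
  have hlog : log p ≤ (p : ℝ) ^ (1 - γ) / (1 - γ) := log_le_rpow_div hp0.le hγ'
  rw [div_mul_eq_mul_div, le_div_iff₀ (by positivity)]
  refine le_of_mul_le_mul_right ?_ (rpow_pos_of_pos hp0 (1 - γ))
  calc (p : ℝ) ^ γ * ((1 - γ) * log 2) * (p : ℝ) ^ (1 - γ)
      = (1 - γ) * (p * log 2) := by
        rw [mul_right_comm, ← rpow_add hp0, add_sub_cancel, rpow_one]; ring
    _ ≤ (1 - γ) * ((k + 3) * ((p : ℝ) ^ (1 - γ) / (1 - γ))) := by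
        grw [nth_prime_mul_log_two_le k, hlog]
    _ = (k + 3) * (p : ℝ) ^ (1 - γ) := by field_simp
    _ ≤ 3 * (k + 1) * (p : ℝ) ^ (1 - γ) := by gcongr; linarith [(k.cast_nonneg : (0 : ℝ) ≤ k)]

end Primes

section RotatorPeriod

/-- The period of the `i`-th rotator.  The `m + 1` primes `p_a, …, p_{a+m}` have to be shared among
`m` rotators, so the `0`-th rotator takes two of them. -/
def rotatorPeriod (a i : ℕ) : ℕ :=
  if i = 0 then Nat.nth Nat.Prime a * Nat.nth Nat.Prime (a + 1) else Nat.nth Nat.Prime (a + 1 + i)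

variable {a m : ℕ}

lemma rotatorPeriod_dvd_prod {i : ℕ} (hi : i < m) :
    rotatorPeriod a i ∣ ∏ j ∈ Finset.Icc a (a + m), Nat.nth Nat.Prime j := by
  rw [rotatorPeriod]
  split_ifs with hi0
  · rw [← Finset.prod_pair (f := Nat.nth Nat.Prime) a.lt_succ_self.ne]
    refine Finset.prod_dvd_prod_of_subset _ _ _ fun j hj => ?_
    rw [Finset.mem_insert, Finset.mem_singleton] at hj
    exact Finset.mem_Icc.2 (by lia)
  · exact Finset.dvd_prod_of_mem _ (Finset.mem_Icc.2 (by lia))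

lemma prod_dvd_of_rotatorPeriod_dvd {k : ℕ} (hm : 0 < m) (h : ∀ i < m, rotatorPeriod a i ∣ k) :
    ∏ j ∈ Finset.Icc a (a + m), Nat.nth Nat.Prime j ∣ k := by
  refine prod_nth_prime_dvd fun j hj => ?_
  obtain ⟨hja, hjm⟩ := Finset.mem_Icc.1 hj
  have h0 : Nat.nth Nat.Prime a * Nat.nth Nat.Prime (a + 1) ∣ k := h 0 hm
  obtain rfl | rfl | ⟨i, rfl⟩ : j = a ∨ j = a + 1 ∨ ∃ i, j = a + 1 + (i + 1) := by
    by_cases hj : j < a + 2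
    · lia
    · exact Or.inr (Or.inr ⟨j - (a + 2), by lia⟩)
  · exact dvd_of_mul_right_dvd h0
  · exact dvd_of_mul_left_dvd h0
  · exact h (i + 1) (by lia)

/- Without rotators nothing forces `k` to be divisible by the product, which is then `p_6 = 17`; the
factor `17` makes up for that. -/
lemma prod_dvd_seventeen_mul {k : ℕ} (h : ∀ i < m, rotatorPeriod (m + 6) i ∣ k) :
    ∏ j ∈ Finset.Icc (m + 6) (m + 6 + m), Nat.nth Nat.Prime j ∣ 17 * k := by
  rcases m.eq_zero_or_pos with rfl | hm
  · simp [nth_prime_six]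
  · exact (prod_dvd_of_rotatorPeriod_dvd hm h).mul_left 17

lemma sum_rotatorPeriod_rpow_le {γ : ℝ} (hγ : 0 ≤ γ) :
    ∑ i : Fin m, (rotatorPeriod a i : ℝ) ^ γ ≤
      m * (Nat.nth Nat.Prime (a + m) : ℝ) ^ γ +
        (Nat.nth Nat.Prime (a + m) : ℝ) ^ γ * (Nat.nth Nat.Prime (a + m) : ℝ) ^ γ := by
  cases m with
  | zero => simpa using mul_self_nonneg _
  | succ m =>
    set Q := (Nat.nth Nat.Prime (a + (m + 1)) : ℝ) ^ γ
    have hle {j : ℕ} (hj : j ≤ a + (m + 1)) : (Nat.nth Nat.Prime j : ℝ) ^ γ ≤ Q :=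
      rpow_le_rpow (by positivity) (mod_cast nth_prime_mono hj) hγ
    have hhead : (rotatorPeriod a 0 : ℝ) ^ γ ≤ Q * Q := by
      rw [rotatorPeriod, if_pos rfl, Nat.cast_mul, mul_rpow (by positivity) (by positivity)]
      gcongr <;> exact hle (by lia)
    have htail (i : Fin m) : (rotatorPeriod a i.succ : ℝ) ^ γ ≤ Q := hle (by simp; lia)
    rw [Fin.sum_univ_succ, add_comm]
    refine add_le_add ((Finset.sum_le_card_nsmul _ _ Q fun i _ => htail i).trans ?_) hhead
    rw [Finset.card_fin, nsmul_eq_mul]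
    gcongr
    exact m.le_succ

/- Compared to a sum over `m` primes of size at most `p_{2m+6}`, the product of two primes costs
a further factor `p_{2m+6}^γ`, which is only of order `m`. -/
lemma exists_sum_rotatorPeriod_rpow_le {γ : ℝ} (hγ : 0 ≤ γ) (hγ' : γ < 1) :
    ∃ C > 0, ∀ m : ℕ, ∑ i : Fin m, (rotatorPeriod (m + 6) i : ℝ) ^ γ ≤
      C * (m + 1) * (Nat.nth Nat.Prime (m + 6 + m) : ℝ) ^ γ := by
  obtain ⟨C, hC, hprime⟩ := exists_nth_prime_rpow_le hγ'
  refine ⟨1 + 7 * C, by positivity, fun m => (sum_rotatorPeriod_rpow_le hγ).trans ?_⟩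
  set Q := (Nat.nth Nat.Prime (m + 6 + m) : ℝ) ^ γ
  have hQ : Q ≤ 7 * C * (m + 1) := by
    have hmC : 0 ≤ m * C := by positivity
    have hbound := hprime (m + 6 + m)
    push_cast at hbound
    linarith
  calc m * Q + Q * Q ≤ (m + 1) * Q + 7 * C * (m + 1) * Q := by gcongr; linarith
    _ = (1 + 7 * C) * (m + 1) * Q := by ring

end RotatorPeriod

lemma div_mem_Icc_of_dvd_mul {k l M N : ℕ} (hl : 0 < l) (hk : 0 < k) (hkq : k < N * M)
    (h : N ∣ l * k) : (k / N : ℝ) ∈ Set.Icc (1 / l : ℝ) (M - 1 / l) := by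
  obtain ⟨s, hs⟩ := h
  have hN : 0 < N := Nat.pos_of_mul_pos_right (hk.trans hkq)
  have hs0 : 0 < s := Nat.pos_of_mul_pos_left (hs ▸ Nat.mul_pos hl hk)
  have hsM : s < l * M := by
    refine Nat.lt_of_mul_lt_mul_left (a := N) ?_
    calc N * s = l * k := hs.symm
      _ < l * (N * M) := by gcongr
      _ = N * (l * M) := Nat.mul_left_comm _ _ _
  have hdiv : (k / N : ℝ) = s / l := by
    rw [div_eq_div_iff (by positivity) (by positivity)]
    exact_mod_cast (by lia : k * l = s * N)
  have hl' : (0 : ℝ) < l := mod_cast hl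
  rw [hdiv, sub_div' hl'.ne']
  constructor <;> gcongr
  · exact_mod_cast hs0
  · rw [le_sub_iff_add_le, mul_comm]
    exact_mod_cast hsM

section Synchronization

variable {m : ℕ}

/-- The synchronization conditions at `a` between the dynamics `F` of the annulus and a function `g`
of the lifted angles: `a` is `q`-periodic, `g = 1` and `dg = 0` at `a`, and `g = 0` and `dg = 0` at
the other `q - 1` points of the orbit of `a`. -/
def IsSynchronized (m : ℕ) (F : Ann m → Ann m) (g : (Fin m → ℝ) → ℝ) (a : Ann m) (q : ℕ) : Prop :=
  F^[q] a = a ∧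
    (∀ y, projVec m y = a.1 → g y = 1) ∧
    (∀ y, projVec m y = a.1 → fderiv ℝ g y = 0) ∧
    ∀ k, 1 ≤ k → k ≤ q - 1 →
      (∀ y, projVec m y = (F^[k] a).1 → g y = 0) ∧
        ∀ y, projVec m y = (F^[k] a).1 → fderiv ℝ g y = 0

lemma isSynchronized_tensorProd {u : Fin m → ℝ → ℝ} (hu : ∀ i, IsPulse (u i))
    {F : Ann m → Ann m} {a : Ann m} {d : ℕ → (Fin m → ℝ) × (Fin m → ℝ)} {q : ℕ}
    (hd : ∀ k, F^[k] a = projAnn m (d k)) (hq : F^[q] a = a)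
    (h0 : tensorProd u (d 0).1 = 1)
    (hk : ∀ k, 1 ≤ k → k ≤ q - 1 → tensorProd u (d k).1 = 0) :
    IsSynchronized m F (tensorProd u) a q := by
  have hvalue {k : ℕ} {y : Fin m → ℝ} (hy : projVec m y = (F^[k] a).1) :
      tensorProd u y = tensorProd u (d k).1 :=
    tensorProd_eq_of_projVec_eq hu (hy.trans (congrArg Prod.fst (hd k)))
  have hcritical {y : Fin m → ℝ} (hy : tensorProd u y = 0 ∨ tensorProd u y = 1) :
      fderiv ℝ (tensorProd u) y = 0 := fderiv_eq_zero_of_mem_Icc (tensorProd_mem_Icc hu) hy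
  have hone (y : Fin m → ℝ) (hy : projVec m y = a.1) : tensorProd u y = 1 :=
    (hvalue (k := 0) hy).trans h0
  have hzero (k : ℕ) (h1 : 1 ≤ k) (hkq : k ≤ q - 1) (y : Fin m → ℝ)
      (hy : projVec m y = (F^[k] a).1) : tensorProd u y = 0 := (hvalue hy).trans (hk k h1 hkq)
  exact ⟨hq, hone, fun y hy => hcritical (.inr (hone y hy)), fun k h1 hkq =>
    ⟨hzero k h1 hkq, fun y hy => hcritical (.inl (hzero k h1 hkq y hy))⟩⟩

end Synchronization

lemma le_two_mul_floor {x : ℝ} (hx : 1 ≤ x) : x ≤ (2 * ⌊x⌋₊ : ℕ) := by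
  have hfloor := (Nat.div_two_lt_floor hx).le
  push_cast
  linarith

lemma inv_mul_toReal_le_inv_sq {M N : ℕ} {c E : ℝ} {x : ℝ≥0∞} (hN : 0 < N) (hM : 0 < M)
    (hcE : 0 ≤ c * E) (hx : x ≤ ENNReal.ofReal (c * E)) (hcM : c * N * E ≤ M) :
    ((N * M : ℕ) : ℝ)⁻¹ * x.toReal ≤ ((N : ℝ) ^ 2)⁻¹ := by
  have hx' : x.toReal ≤ c * E := ENNReal.toReal_le_of_le_ofReal hcE hx
  rw [Nat.cast_mul, inv_mul_le_iff₀ (by positivity)]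
  calc x.toReal ≤ c * E := hx'
    _ = c * N * E / N := by field_simp
    _ ≤ M / N := by gcongr
    _ = N * M * ((N : ℝ) ^ 2)⁻¹ := by field_simp

section Coupling

variable {m : ℕ} {T : ℝ} {Θ v b : ℝ → ℝ} {D : Fin m → ℕ}

/-- A lifted orbit of `pendulumRotator (N ^ 2)⁻¹ 0`, made of a pendulum slowed down by the factor
`N` and of rotators of period `D i`. -/
def pendulumRotatorOrbit (Θ v : ℝ → ℝ) (N : ℝ) (D : Fin m → ℕ) (t : ℝ) :
    (Fin (m + 1) → ℝ) × (Fin (m + 1) → ℝ) :=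
  (Fin.cons (Θ (t / N)) fun i => t / D i, Fin.cons (v (t / N) / N) fun i => 1 / D i)

lemma hasDerivAt_pendulumRotatorOrbit (h : IsPendulumRotation T Θ v) {N : ℝ} (hN : N ≠ 0)
    (D : Fin m → ℕ) (t : ℝ) :
    HasDerivAt (pendulumRotatorOrbit Θ v N D)
      (hamField (m + 1) (pendulumRotator (N ^ 2)⁻¹ 0) (pendulumRotatorOrbit Θ v N D t)) t := by
  have htime : HasDerivAt (fun s => s / N) (1 / N) t := (hasDerivAt_id t).div_const N
  have hangle := (h.hasDerivAt_angle (t / N)).comp t htime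
  have hspeed := ((h.hasDerivAt_speed (t / N)).comp t htime).div_const N
  rw [hamField_pendulumRotator]
  refine HasDerivAt.prodMk (hasDerivAt_pi.2 (Fin.cases ?_ fun i => ?_))
    (hasDerivAt_pi.2 (Fin.cases ?_ fun i => ?_))
  · exact hangle.congr_deriv (mul_one_div _ _)
  · exact (hasDerivAt_id t).div_const _
  · refine hspeed.congr_deriv ?_
    simp only [pendulumRotatorOrbit, Pi.single_eq_same, Fin.cons_zero]
    field_simp
  · exact (hasDerivAt_const t _).congr_deriv (by simp)

lemma projAnn_pendulumRotatorOrbit_period {M N : ℕ} (h : IsPendulumRotation M Θ v) (hN : 0 < N)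
    (hDN : ∀ i, D i ∣ N) :
    projAnn (m + 1) (pendulumRotatorOrbit Θ v N D (N * M : ℕ)) =
      projAnn (m + 1) (pendulumRotatorOrbit Θ v N D 0) := by
  have htime : ((N * M : ℕ) : ℝ) / N = 0 + M := by
    rw [Nat.cast_mul, mul_div_cancel_left₀ _ (by positivity), zero_add]
  refine Prod.ext (funext (Fin.cases ?_ fun i => ?_)) (funext (Fin.cases ?_ fun i => rfl))
  · simp only [projAnn, pendulumRotatorOrbit, htime, h.map_add_period, Fin.cons_zero, zero_div,
      AddCircle.coe_add, AddCircle.coe_period, add_zero]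
  · obtain ⟨r, hr⟩ := (hDN i).mul_right M
    have hD : (D i : ℝ) ≠ 0 := mod_cast (Nat.pos_of_dvd_of_pos (hDN i) hN).ne'
    have hturns : ((N * M : ℕ) : ℝ) / D i = r := by
      rw [hr, Nat.cast_mul, mul_div_cancel_left₀ _ hD]
    simp only [projAnn, pendulumRotatorOrbit, Fin.cons_succ, hturns, zero_div, AddCircle.coe_zero]
    exact (AddCircle.coe_eq_zero_iff 1).2 ⟨r, by simp⟩
  · simp only [projAnn, pendulumRotatorOrbit, htime, h.speed_add_period, zero_div]

/-- The factors of the coupling function: the pulse `b` in the angle of the pendulum and a Fejér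
kernel of order `D i` in the angle of the `i`-th rotator. -/
def couplingFactor (b : ℝ → ℝ) (D : Fin m → ℕ) : Fin (m + 1) → ℝ → ℝ :=
  Fin.cons b fun i => fejer (D i)

lemma isPulse_couplingFactor (hb : IsPulse b) (hD : ∀ i, 0 < D i) :
    ∀ i, IsPulse (couplingFactor b D i) :=
  Fin.cases hb fun i => isPulse_fejer (hD i)

lemma tensorProd_couplingFactor_orbit_zero (hb : IsPulse b) (hD : ∀ i, 0 < D i)
    (h : IsPendulumRotation T Θ v) (N : ℝ) :
    tensorProd (couplingFactor b D) (pendulumRotatorOrbit Θ v N D 0).1 = 1 := by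
  refine Finset.prod_eq_one fun i _ => ?_
  have hzero : (pendulumRotatorOrbit Θ v N D 0).1 i = 0 := by
    cases i using Fin.cases <;> simp [pendulumRotatorOrbit, h.map_zero]
  rw [hzero, (isPulse_couplingFactor hb hD i).map_zero]

lemma tensorProd_couplingFactor_orbit_eq_zero {k l M N : ℕ} (hl : 4 ≤ l)
    (hb : ∀ x ∈ Set.Icc (1 / l : ℝ) (1 - 1 / l), b x = 0) (h : IsPendulumRotation M Θ v)
    (hDN : (∀ i, D i ∣ k) → N ∣ l * k) (hk : 0 < k) (hkq : k < N * M) :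
    tensorProd (couplingFactor b D) (pendulumRotatorOrbit Θ v N D k).1 = 0 := by
  by_cases hall : ∀ i, D i ∣ k
  · have hl' : (1 / l : ℝ) ∈ Set.Icc 0 (1 / 4) :=
      ⟨by positivity, one_div_le_one_div_of_le (by norm_num) (mod_cast hl)⟩
    have htime := div_mem_Icc_of_dvd_mul (by lia) hk hkq (hDN hall)
    exact Finset.prod_eq_zero (Finset.mem_univ 0) (hb _ (h.mem_Icc _ hl' _ htime))
  · obtain ⟨i, hi⟩ := not_forall.1 hall
    exact Finset.prod_eq_zero (Finset.mem_univ i.succ) (fejer_div_eq_zero hi)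

theorem exists_isSynchronized_pendulumRotator (hb : IsPulse b) {l M N : ℕ} (hl : 4 ≤ l)
    (hb0 : ∀ x ∈ Set.Icc (1 / l : ℝ) (1 - 1 / l), b x = 0) (hN : 0 < N) (hM : 0 < M)
    (hDN : ∀ i, D i ∣ N) (hND : ∀ k, (∀ i, D i ∣ k) → N ∣ l * k) :
    ∃ a, ∀ Φ, IsHamFlow (m + 1) (pendulumRotator ((N : ℝ) ^ 2)⁻¹ 0) Φ →
      IsSynchronized (m + 1) (Φ 1) (tensorProd (couplingFactor b D)) a (N * M) := by
  obtain ⟨Θ, v, h⟩ := exists_isPendulumRotation (T := M) (mod_cast hM)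
  obtain ⟨K, hK⟩ := exists_lipschitzWith_hamField_pendulumRotator ((N : ℝ) ^ 2)⁻¹ (0 : Fin (m + 1))
  have hD (i : Fin m) : 0 < D i := Nat.pos_of_dvd_of_pos (hDN i) hN
  refine ⟨projAnn (m + 1) (pendulumRotatorOrbit Θ v N D 0), fun Φ hΦ => ?_⟩
  have horbit := hΦ.iterate_projAnn hK
    (hasDerivAt_pendulumRotatorOrbit h (N := N) (mod_cast hN.ne') D)
  refine isSynchronized_tensorProd (isPulse_couplingFactor hb hD)
    (d := fun k : ℕ => pendulumRotatorOrbit Θ v N D k) horbit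
    ((horbit _).trans (projAnn_pendulumRotatorOrbit_period h hN hDN)) ?_ fun k hk hkq => ?_
  · simpa using tensorProd_couplingFactor_orbit_zero hb hD h N
  · exact tensorProd_couplingFactor_orbit_eq_zero hl hb0 h (hND k) hk (by lia)

lemma gevreyNormTor_couplingFactor_le {α L c S : ℝ} (hα : 1 < α) (hL : 0 ≤ L) (hb : IsPulse b)
    (hD : ∀ i, 0 < D i) (hc : 0 ≤ c) (hbc : gevreyNorm α L b ≤ ENNReal.ofReal c)
    (hS : ∑ i, (D i : ℝ) ^ (1 / α) ≤ S) :
    gevreyNormTor (m + 1) α L (tensorProd (couplingFactor b D)) ≤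
      ENNReal.ofReal (c * exp (α * L * (2 * π) ^ (1 / α) * S)) := by
  refine (gevreyNormTor_tensorProd_le hL fun i =>
    (isPulse_couplingFactor hb hD i).contDiff).trans ?_
  calc ∏ i, gevreyNorm α L (couplingFactor b D i)
      = gevreyNorm α L b * ∏ i, gevreyNorm α L (fejer (D i)) := Fin.prod_univ_succ _
    _ ≤ ENNReal.ofReal c *
        ∏ i, ENNReal.ofReal (exp (α * L * (2 * π) ^ (1 / α) * (D i : ℝ) ^ (1 / α))) :=
      mul_le_mul' hbc (Finset.prod_le_prod' fun i _ => gevreyNorm_fejer_le hα hL (D i))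
    _ = ENNReal.ofReal (c * exp (α * L * (2 * π) ^ (1 / α) * ∑ i, (D i : ℝ) ^ (1 / α))) := by
      rw [ENNReal.ofReal_mul hc, Finset.mul_sum, exp_sum,
        ENNReal.ofReal_prod_of_nonneg fun _ _ => by positivity]
    _ ≤ _ := by gcongr

theorem exists_couplingData {α L c S : ℝ} {l M N : ℕ} (hα : 1 < α) (hL : 0 ≤ L) (hb : IsPulse b)
    (hl : 4 ≤ l) (hb0 : ∀ x ∈ Set.Icc (1 / l : ℝ) (1 - 1 / l), b x = 0) (hc : 0 < c)
    (hbc : gevreyNorm α L b ≤ ENNReal.ofReal c) (hN : 0 < N) (hDN : ∀ i, D i ∣ N)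
    (hND : ∀ k, (∀ i, D i ∣ k) → N ∣ l * k) (hS : ∑ i, (D i : ℝ) ^ (1 / α) ≤ S)
    (hM : c * N * exp (α * L * (2 * π) ^ (1 / α) * S) ≤ M) :
    ∃ (g : (Fin (m + 1) → ℝ) → ℝ) (a : Ann (m + 1)),
      ContDiff ℝ (⊤ : ℕ∞) g ∧
      (∀ x i, g (x + Pi.single i 1) = g x) ∧
      gevreyNormTor (m + 1) α L g ≠ ⊤ ∧
      (∃ Φ, IsHamFlow (m + 1) (pendulumRotator ((N : ℝ) ^ 2)⁻¹ 0) Φ) ∧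
      (∀ Φ, IsHamFlow (m + 1) (pendulumRotator ((N : ℝ) ^ 2)⁻¹ 0) Φ →
        IsSynchronized (m + 1) (Φ 1) g a (N * M)) ∧
      ((N * M : ℕ) : ℝ)⁻¹ * (gevreyNormTor (m + 1) α L g).toReal ≤ ((N : ℝ) ^ 2)⁻¹ := by
  have hM0 : 0 < M := Nat.cast_pos.1 (lt_of_lt_of_le (by positivity) hM)
  have hD (i : Fin m) : 0 < D i := Nat.pos_of_dvd_of_pos (hDN i) hN
  have hpulse := isPulse_couplingFactor hb hD
  have hnorm := gevreyNormTor_couplingFactor_le hα hL hb hD hc.le hbc hS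
  obtain ⟨a, ha⟩ := exists_isSynchronized_pendulumRotator hb hl hb0 hN hM0 hDN hND
  exact ⟨tensorProd (couplingFactor b D), a, contDiff_tensorProd fun i => (hpulse i).contDiff,
    tensorProd_add_single hpulse, ne_top_of_le_ne_top ENNReal.ofReal_ne_top hnorm,
    exists_isHamFlow_pendulumRotator _ _, ha,
    inv_mul_toReal_le_inv_sq hN hM0 (by positivity) hnorm hM⟩

end Coupling

/-- Proposition 3.2 of the paper: the coupling data in the Gevrey case.  Here
`N_n = p_{n+3}⋯p_{2n}` is a product of consecutive primes, `G_n` is the time-one map of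
`½(I₂²+⋯+I_{n−1}²) + N_n^{−2}V(θ₂)` on `𝔸^{n−2}` with `V(θ) = −cos(2πθ)`, and with
`M_n = 2⌊c₁N_n exp(c₂(n−2)p_{2n}^{1/α})⌋`, `q_n = N_nM_n`, there are a `G^{α,L₁}` function
`g_n` of the angle variables and a `q_n`-periodic point `a_n` of `G_n` satisfying the
synchronization conditions and the estimate `q_n^{−1}|g_n|_{α,L₁} ≤ N_n^{−2}`. -/
theorem gevrey_coupling_data (α L₁ : ℝ) (hα : 1 < α) (hL₁ : 0 < L₁) :
    ∃ c₁ c₂ : ℝ, 0 < c₁ ∧ 0 < c₂ ∧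
      ∀ n : ℕ, ∀ _hn : 3 ≤ n,
      ∀ N : ℕ, N = ∏ j ∈ Finset.Icc (n + 3) (2 * n), Nat.nth Nat.Prime j →
      ∀ M : ℕ,
        M = 2 * ⌊c₁ * N * Real.exp (c₂ * ((n : ℝ) - 2) *
          ((Nat.nth Nat.Prime (2 * n) : ℝ) ^ (1 / α)))⌋₊ →
      ∀ q : ℕ, q = N * M →
        ∃ g : (Fin (n - 2) → ℝ) → ℝ, ∃ a : Ann (n - 2),
          ContDiff ℝ (⊤ : ℕ∞) g ∧
          (∀ x : Fin (n - 2) → ℝ, ∀ i : Fin (n - 2), g (x + Pi.single i 1) = g x) ∧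
          gevreyNormTor (n - 2) α L₁ g ≠ ⊤ ∧
          (∃ Φ : ℝ → Ann (n - 2) → Ann (n - 2),
            IsHamFlow (n - 2)
              (fun z => (1 / 2) * (∑ i, (z.2 i) ^ 2) +
                ((N : ℝ) ^ 2)⁻¹ * (-cosC (z.1 ⟨0, by omega⟩))) Φ) ∧
          (∀ Φ : ℝ → Ann (n - 2) → Ann (n - 2),
            IsHamFlow (n - 2)
              (fun z => (1 / 2) * (∑ i, (z.2 i) ^ 2) +
                ((N : ℝ) ^ 2)⁻¹ * (-cosC (z.1 ⟨0, by omega⟩))) Φ →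
            (Φ 1)^[q] a = a ∧
            (∀ y : Fin (n - 2) → ℝ, projVec (n - 2) y = a.1 → g y = 1) ∧
            (∀ y : Fin (n - 2) → ℝ, projVec (n - 2) y = a.1 → fderiv ℝ g y = 0) ∧
            (∀ k : ℕ, 1 ≤ k → k ≤ q - 1 →
              (∀ y : Fin (n - 2) → ℝ, projVec (n - 2) y = ((Φ 1)^[k] a).1 → g y = 0) ∧
              (∀ y : Fin (n - 2) → ℝ, projVec (n - 2) y = ((Φ 1)^[k] a).1 →
                fderiv ℝ g y = 0))) ∧
          (q : ℝ)⁻¹ * (gevreyNormTor (n - 2) α L₁ g).toReal ≤ (((N : ℝ)) ^ 2)⁻¹ := by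
  obtain ⟨b, hb, hb0, hbtop⟩ :=
    exists_isPulse_gevreyNorm_lt_top (η := 1 / 17) hα hL₁.le (by norm_num) (by norm_num)
  obtain ⟨c, hc, hbc⟩ : ∃ c ≥ 1, gevreyNorm α L₁ b ≤ ENNReal.ofReal c :=
    ⟨max 1 (gevreyNorm α L₁ b).toReal, le_max_left _ _,
      (ENNReal.le_ofReal_iff_toReal_le hbtop.ne (by positivity)).2 (le_max_right _ _)⟩
  have hα' : 1 / α < 1 := (div_lt_one (by positivity)).2 hα
  obtain ⟨C, hC, hsum⟩ := exists_sum_rotatorPeriod_rpow_le (by positivity) hα'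
  refine ⟨c, α * L₁ * (2 * π) ^ (1 / α) * C, by positivity, by positivity, ?_⟩
  rintro n hn N rfl M rfl q rfl
  obtain ⟨m, rfl⟩ := Nat.exists_eq_add_of_le' hn
  rw [show 2 * (m + 3) = m + 6 + m by ring, show ((m + 3 : ℕ) : ℝ) - 2 = m + 1 by push_cast; ring,
    mul_assoc _ C, mul_assoc _ (C * _)]
  have hN := prod_nth_prime_pos (Finset.Icc (m + 6) (m + 6 + m))
  exact exists_couplingData (D := fun i : Fin m => rotatorPeriod (m + 6) i) (l := 17) hα hL₁.le hb
    (by norm_num) (mod_cast hb0) (zero_lt_one.trans_le hc) hbc hN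
    (fun i => rotatorPeriod_dvd_prod i.2) (fun k hk =>
      prod_dvd_seventeen_mul fun i hi => hk ⟨i, hi⟩) (hsum m)
    (le_two_mul_floor (one_le_mul_of_one_le_of_one_le
      (one_le_mul_of_one_le_of_one_le hc (mod_cast hN)) (one_le_exp (by positivity))))
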